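/- For every integer N ≥ 3, 𝔼 V_{ℰ³,N} = 1 − 1/(N+1) − (105 N (N−1) / 2^{N+5}) ∫₀¹ (1 − t²)⁴ (3t − t³)^{N−2} dt, where ℰ³ is an ellipsoid in ℝ³ (e.g. the closed unit ball). In particular, 𝔼 V_{ℰ³,3} = 27/512 and 𝔼 V_{ℰ³,4} = 72/715. -/

import Mathlib

/-!
Fix the points `x₁, …, x_N`. By linear-programming duality almost every `y` has a unique
representation of least `ℓ¹`-norm `y = ∑ cᵢ xᵢ`, supported on `n` of the points, its optimal basis;
`y` lies in the polytope exactly when that norm is at most `1`, and a basis is optimal for `y`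
exactly when the other `N - n` points lie in the slab between the hyperplane through its suitably
signed members and the reflected hyperplane. Hence the polytope splits, up to a null set, into
simplices indexed by bases and signs, and flipping signs reduces its mean volume to an integral of
`|det W| * vol (slab W) ^ (N - n)` over `n`-tuples `W` of points of the body.

Placing the `n` points on a common graph `x₀ = b + ⟪a, p⟫` is a change of variables of affine
Blaschke–Petkantschin type, whose Jacobian combines with `|det W|` into a squared determinant. The
inner integral is then the second moment of the volume of a random simplex in a section of the ball,
an ellipsoid, and Andréief's identity evaluates it. In dimension three the slab of half-width `t`
has volume `(2π/3) (3t - t³)`, and since `3t - t³` has derivative `3 (1 - t²)`, an integration by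
parts brings the remaining one-dimensional integral into the stated form.
-/

open MeasureTheory Set

noncomputable section

variable {E : Type*} [NormedAddCommGroup E] [InnerProductSpace ℝ E]

/-- A symmetric convex body: a compact convex set with nonempty interior with `K = -K`. -/
def IsSymConvexBody (K : Set E) : Prop :=
  IsCompact K ∧ Convex ℝ K ∧ (interior K).Nonempty ∧ K = -K

/-- `momentU n N K p = 𝔼 U_{K,N}^p`, the `p`-th moment of the normalized volume of the
convex hull of `N` independent uniform random points in `K ⊆ ℝⁿ`. -/
def momentU (n N : ℕ) (K : Set (EuclideanSpace ℝ (Fin n))) (p : ℝ) : ℝ :=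
  (∫ x : Fin N → EuclideanSpace ℝ (Fin n) in {x | ∀ i, x i ∈ K},
      ((volume (convexHull ℝ (Set.range x))).toReal / (volume K).toReal) ^ p) /
    (volume K).toReal ^ N

/-- `momentV n N K p = 𝔼 V_{K,N}^p`, the `p`-th moment of the normalized volume of the
symmetric convex hull `conv{±x₁, …, ±x_N}` of `N` independent uniform random points
in `K ⊆ ℝⁿ`. -/
def momentV (n N : ℕ) (K : Set (EuclideanSpace ℝ (Fin n))) (p : ℝ) : ℝ :=
  (∫ x : Fin N → EuclideanSpace ℝ (Fin n) in {x | ∀ i, x i ∈ K},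
      ((volume (convexHull ℝ (Set.range x ∪ -Set.range x))).toReal / (volume K).toReal) ^ p) /
    (volume K).toReal ^ N

open scoped Matrix Nat

/-- The unit ball of `ℓ¹(ι)`. -/
def crossPolytope (ι : Type*) [Fintype ι] : Set (ι → ℝ) :=
  {c | ∑ i, |c i| ≤ 1}

/-- The symmetric polytope `conv{±xᵢ}`, as the image of the cross-polytope under the linear map
sending the `i`-th unit vector to `x i`. -/
def symHull {ι F : Type*} [Fintype ι] [AddCommGroup F] [Module ℝ F] (x : ι → F) : Set F :=
  Fintype.linearCombination ℝ x '' crossPolytope ι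

section SymHull

variable {ι F G : Type*} [Fintype ι] [AddCommGroup F] [Module ℝ F] [AddCommGroup G] [Module ℝ G]

theorem mem_symHull {x : ι → F} {y : F} :
    y ∈ symHull x ↔ ∃ c : ι → ℝ, ∑ i, |c i| ≤ 1 ∧ ∑ i, c i • x i = y :=
  Iff.rfl

theorem convex_crossPolytope : Convex ℝ (crossPolytope ι) := by
  intro c hc d hd a b ha hb hab
  calc ∑ i, |a * c i + b * d i|
      ≤ ∑ i, (a * |c i| + b * |d i|) := by
        gcongr with i
        refine (abs_add_le _ _).trans_eq ?_
        rw [abs_mul, abs_mul, abs_of_nonneg ha, abs_of_nonneg hb]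
    _ = a * ∑ i, |c i| + b * ∑ i, |d i| := by
        rw [Finset.sum_add_distrib, Finset.mul_sum, Finset.mul_sum]
    _ ≤ a * 1 + b * 1 := by gcongr <;> assumption
    _ = 1 := by linarith

theorem isClosed_crossPolytope : IsClosed (crossPolytope ι) :=
  isClosed_le (by fun_prop) continuous_const

theorem isCompact_crossPolytope : IsCompact (crossPolytope ι) := by
  refine (isCompact_univ_pi fun _ : ι => isCompact_Icc (a := (-1 : ℝ)) (b := 1)).of_isClosed_subset
    isClosed_crossPolytope fun c hc i _ => ?_
  exact abs_le.1 ((Finset.single_le_sum (fun j _ => abs_nonneg (c j)) (Finset.mem_univ i)).trans hc)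

theorem sum_smul_mem_of_sum_abs_le_one {K : Set F} (hK : Convex ℝ K) (h0 : (0 : F) ∈ K)
    {x : ι → F} (hx : ∀ i, x i ∈ K) (hnx : ∀ i, -x i ∈ K) {c : ι → ℝ} (hc : ∑ i, |c i| ≤ 1) :
    ∑ i, c i • x i ∈ K := by
  rcases (Finset.univ.sum_nonneg fun i _ => abs_nonneg (c i)).eq_or_lt with hzero | hpos
  · have hci : ∀ i, c i = 0 := by
      simpa [Finset.sum_eq_zero_iff_of_nonneg] using hzero.symm
    simpa [hci] using h0
  · set t := ∑ i, |c i| with ht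
    have hmem : ∑ i, (|c i| / t) • (if 0 ≤ c i then x i else -x i) ∈ K := by
      refine hK.sum_mem (fun i _ => by positivity) ?_ fun i _ => ?_
      · rw [← Finset.sum_div, ← ht, div_self hpos.ne']
      · split_ifs
        exacts [hx i, hnx i]
    convert hK.smul_mem_of_zero_mem h0 hmem ⟨hpos.le, hc⟩ using 1
    rw [Finset.smul_sum]
    refine Finset.sum_congr rfl fun i _ => ?_
    rw [smul_smul, mul_div_cancel₀ _ hpos.ne']
    split_ifs with hi
    · rw [abs_of_nonneg hi]
    · rw [abs_of_neg (not_le.1 hi), smul_neg, neg_smul, neg_neg]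

theorem convexHull_range_union_neg_range [Nonempty ι] (x : ι → F) :
    convexHull ℝ (range x ∪ -range x) = symHull x := by
  classical
  refine Subset.antisymm (convexHull_min ?_ ?_) ?_
  · rintro y (⟨i, rfl⟩ | ⟨i, hi⟩)
    · exact ⟨Pi.single i 1, by simp [crossPolytope, Pi.single_apply, apply_ite abs], by simp⟩
    · exact ⟨Pi.single i (-1), by simp [crossPolytope, Pi.single_apply, apply_ite abs],
        by simp [hi]⟩
  · exact convex_crossPolytope.linear_image _
  · rintro _ ⟨c, hc, rfl⟩
    have hx : ∀ i, x i ∈ convexHull ℝ (range x ∪ -range x) :=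
      fun i => subset_convexHull _ _ (Or.inl ⟨i, rfl⟩)
    have hnx : ∀ i, -x i ∈ convexHull ℝ (range x ∪ -range x) :=
      fun i => subset_convexHull _ _ (Or.inr ⟨i, by simp⟩)
    have hconv := convex_convexHull ℝ (range x ∪ -range x)
    obtain ⟨i₀⟩ := ‹Nonempty ι›
    have h0 : (0 : F) ∈ convexHull ℝ (range x ∪ -range x) := by
      simpa using hconv.midpoint_mem (hx i₀) (hnx i₀)
    exact sum_smul_mem_of_sum_abs_le_one hconv h0 hx hnx hc

theorem image_symHull (f : F →ₗ[ℝ] G) (x : ι → F) : f '' symHull x = symHull (f ∘ x) := by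
  simp only [symHull, image_image]
  refine image_congr fun c _ => ?_
  simp [Fintype.linearCombination_apply]

end SymHull

section MeasurableSymHull

variable {ι F : Type*} [Fintype ι] [NormedAddCommGroup F] [NormedSpace ℝ F]

theorem isCompact_symHull [FiniteDimensional ℝ F] (x : ι → F) : IsCompact (symHull x) :=
  isCompact_crossPolytope.image (LinearMap.continuous_of_finiteDimensional _)

theorem isClosed_setOf_mem_symHull : IsClosed {p : (ι → F) × F | p.2 ∈ symHull p.1} := by
  have : CompactSpace (crossPolytope ι) := isCompact_iff_compactSpace.1 isCompact_crossPolytope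
  have hclosed : IsClosed {q : crossPolytope ι × ((ι → F) × F) |
      ∑ i, (q.1 : ι → ℝ) i • q.2.1 i = q.2.2} :=
    isClosed_eq (continuous_finsetSum _ fun i _ => .smul
      ((continuous_apply i).comp (continuous_subtype_val.comp continuous_fst)) (by fun_prop))
      (by fun_prop)
  convert isClosedMap_snd_of_compactSpace _ hclosed using 1
  ext ⟨x, y⟩
  simp [mem_symHull, crossPolytope]

theorem measurable_volume_symHull {n : ℕ} :
    Measurable fun x : ι → Fin n → ℝ => volume (symHull x) :=
  measurable_measure_prodMk_left isClosed_setOf_mem_symHull.measurableSet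

end MeasurableSymHull

section WeakDuality

variable {ι m : Type*} [Fintype ι] [Fintype m] {x : ι → m → ℝ} {u : m → ℝ}

theorem mul_le_abs_of_abs_le_one {a b : ℝ} (hb : |b| ≤ 1) : a * b ≤ |a| :=
  (le_abs_self _).trans <| (abs_mul a b).trans_le <| mul_le_of_le_one_right (abs_nonneg a) hb

theorem sum_smul_dotProduct_le (hu : ∀ l, |x l ⬝ᵥ u| ≤ 1) (c : ι → ℝ) :
    (∑ l, c l • x l) ⬝ᵥ u ≤ ∑ l, |c l| := by
  simp only [sum_dotProduct, smul_dotProduct, smul_eq_mul]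
  exact Finset.sum_le_sum fun l _ => mul_le_abs_of_abs_le_one (hu l)

theorem sum_smul_dotProduct_lt (hu : ∀ l, |x l ⬝ᵥ u| ≤ 1) {c : ι → ℝ} {j : ι} (hc : c j ≠ 0)
    (hj : |x j ⬝ᵥ u| < 1) : (∑ l, c l • x l) ⬝ᵥ u < ∑ l, |c l| := by
  simp only [sum_dotProduct, smul_dotProduct, smul_eq_mul]
  refine Finset.sum_lt_sum (fun l _ => mul_le_abs_of_abs_le_one (hu l)) ⟨j, Finset.mem_univ j, ?_⟩
  calc c j * (x j ⬝ᵥ u) ≤ |c j| * |x j ⬝ᵥ u| := (le_abs_self _).trans_eq (abs_mul _ _)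
    _ < |c j| := mul_lt_of_lt_one_right (abs_pos.2 hc) hj

end WeakDuality

theorem exists_orderEmbedding_range_exchange {n N : ℕ} (T : Fin n ↪o Fin N) {l : Fin N}
    (hl : l ∉ range T) (j : Fin n) :
    ∃ T' : Fin n ↪o Fin N, range T' = insert l (range T \ {T j}) := by
  classical
  set S : Finset (Fin N) := insert l ((Finset.univ.image T).erase (T j)) with hS
  have hcard : S.card = n := by
    rw [hS, Finset.card_insert_of_notMem (by simpa using fun _ => by simpa using hl),
      Finset.card_erase_of_mem (by simp), Finset.card_image_of_injective _ T.injective,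
      Finset.card_univ, Fintype.card_fin]
    exact Nat.sub_add_cancel j.pos
  refine ⟨S.orderEmbOfFin hcard, ?_⟩
  rw [Finset.range_orderEmbOfFin]
  ext k
  simp [hS, and_comm]

section RatioTest

variable {ι : Type*} [Fintype ι]

/-- The ratio test of the simplex method: decreasing `L` in direction `d` until its first
coordinate vanishes changes no sign. -/
theorem exists_ratio_test {L d : ι → ℝ} (hL : ∀ i, L i ≠ 0)
    (hd : 0 < ∑ i, SignType.sign (L i) * d i) :
    ∃ j, ∃ t : ℝ, 0 < t ∧ L j = t * d j ∧
      ∀ i, |L i - t * d i| = |L i| - t * (SignType.sign (L i) * d i) := by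
  set e : ι → ℝ := fun i => SignType.sign (L i) * d i with he
  have hexists : ∃ i ∈ Finset.univ, 0 < e i :=
    Finset.exists_lt_of_sum_lt (f := fun _ => (0 : ℝ)) (by simpa using hd)
  have hne : (Finset.univ.filter fun i => 0 < e i).Nonempty :=
    hexists.imp fun i hi => by simpa using hi.2
  obtain ⟨j, hj, hmin⟩ := Finset.exists_min_image _ (fun i => |L i| / e i) hne
  have hej : 0 < e j := (Finset.mem_filter.1 hj).2
  refine ⟨j, |L j| / e j, div_pos (abs_pos.2 (hL j)) hej, ?_, fun i => ?_⟩
  · rw [div_mul_eq_mul_div, eq_div_iff hej.ne', ← mul_assoc, self_mul_sign]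
  · have hnonneg : 0 ≤ |L i| - |L j| / e j * e i := by
      rcases le_or_gt (e i) 0 with hi | hi
      · nlinarith [abs_nonneg (L i), div_nonneg (abs_nonneg (L j)) hej.le]
      · have := hmin i (by simpa using hi)
        rw [le_div_iff₀ hi] at this
        linarith
    have hsign : |(SignType.sign (L i) : ℝ)| = 1 := by
      rcases (hL i).lt_or_gt with h | h <;> simp [h]
    have hmul : SignType.sign (L i) * (L i - |L j| / e j * d i) = |L i| - |L j| / e j * e i := by
      rw [mul_sub, sign_mul_self, he]; ring
    rw [← one_mul |_|, ← hsign, ← abs_mul, hmul, abs_of_nonneg hnonneg]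

end RatioTest

section Basis

variable {n N : ℕ}

/-- The square matrix whose rows are the points `x (T i)`. -/
def basisMatrix (x : Fin N → Fin n → ℝ) (T : Fin n ↪o Fin N) : Matrix (Fin n) (Fin n) ℝ :=
  Matrix.of (x ∘ T)

/-- The coordinates of `y` in the basis `x ∘ T`. -/
def basicCoords (x : Fin N → Fin n → ℝ) (T : Fin n ↪o Fin N) (y : Fin n → ℝ) : Fin n → ℝ :=
  y ᵥ* (basisMatrix x T)⁻¹

/-- The vector of signs of the entries of `v`. -/
def signVec (v : Fin n → ℝ) : Fin n → ℝ := fun i => SignType.sign (v i)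

/-- The normal `u` of the hyperplane `{z | z ⬝ᵥ u = 1}` through the points `± x (T i)`, the sign
being that of the `i`-th coordinate of `y` in the basis `x ∘ T`. -/
def dualNormal (x : Fin N → Fin n → ℝ) (T : Fin n ↪o Fin N) (y : Fin n → ℝ) : Fin n → ℝ :=
  (basisMatrix x T)⁻¹ *ᵥ signVec (basicCoords x T y)

/-- Dual feasibility of the basis `x ∘ T` for the linear program of writing `y` as a combination
of the points `x l` with the smallest sum of absolute values of the coefficients. -/
def IsOptimalBasis (x : Fin N → Fin n → ℝ) (T : Fin n ↪o Fin N) (y : Fin n → ℝ) : Prop :=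
  ∀ l ∉ range T, |x l ⬝ᵥ dualNormal x T y| ≤ 1

variable {x : Fin N → Fin n → ℝ} {T T' : Fin n ↪o Fin N} {y : Fin n → ℝ}

theorem sum_basicCoords_smul (hT : (basisMatrix x T).det ≠ 0) (y : Fin n → ℝ) :
    ∑ i, basicCoords x T y i • x (T i) = y := by
  have h : basicCoords x T y ᵥ* basisMatrix x T = y := by
    rw [basicCoords, Matrix.vecMul_vecMul, Matrix.nonsing_inv_mul _ hT.isUnit, Matrix.vecMul_one]
  rwa [Matrix.vecMul_eq_sum] at h

theorem basicCoords_eq (hT : (basisMatrix x T).det ≠ 0) {c : Fin n → ℝ}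
    (hc : ∑ i, c i • x (T i) = y) : basicCoords x T y = c := by
  have h : c ᵥ* basisMatrix x T = y := by rw [Matrix.vecMul_eq_sum]; exact hc
  rw [basicCoords, ← h, Matrix.vecMul_vecMul, Matrix.mul_nonsing_inv _ hT.isUnit,
    Matrix.vecMul_one]

theorem exists_coeff_basicCoords (hT : (basisMatrix x T).det ≠ 0) (y : Fin n → ℝ) :
    ∃ c : Fin N → ℝ, (∀ i, c (T i) = basicCoords x T y i) ∧ (∀ l ∉ range T, c l = 0) ∧
      ∑ l, c l • x l = y ∧ ∑ l, |c l| = ∑ i, |basicCoords x T y i| := by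
  set c := Function.extend T (basicCoords x T y) 0
  have hcT : ∀ i, c (T i) = basicCoords x T y i := T.injective.extend_apply _ _
  have hoff : ∀ l ∉ range T, c l = 0 := fun l hl => Function.extend_apply' _ _ _ hl
  refine ⟨c, hcT, hoff, ?_, ?_⟩
  · rw [← sum_basicCoords_smul hT y]
    exact (Fintype.sum_of_injective T T.injective _ _ (fun l hl => by simp [hoff l hl])
      fun i => by rw [hcT]).symm
  · exact (Fintype.sum_of_injective T T.injective _ _ (fun l hl => by simp [hoff l hl])
      fun i => by rw [hcT]).symm

theorem sum_abs_basicCoords (hT : (basisMatrix x T).det ≠ 0) {c : Fin N → ℝ}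
    (hc : ∑ l, c l • x l = y) (hoff : ∀ l ∉ range T, c l = 0) :
    ∑ i, |basicCoords x T y i| = ∑ l, |c l| := by
  have hcT : ∑ i, (c ∘ T) i • x (T i) = y := by
    rw [← hc]
    exact Fintype.sum_of_injective T T.injective _ _ (fun l hl => by simp [hoff l hl]) fun _ => rfl
  rw [basicCoords_eq hT hcT]
  exact Fintype.sum_of_injective T T.injective _ _ (fun l hl => by simp [hoff l hl]) fun _ => rfl

theorem dotProduct_dualNormal_basis (hT : (basisMatrix x T).det ≠ 0) (y : Fin n → ℝ) (i : Fin n) :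
    x (T i) ⬝ᵥ dualNormal x T y = SignType.sign (basicCoords x T y i) := by
  have h : basisMatrix x T *ᵥ dualNormal x T y = signVec (basicCoords x T y) := by
    rw [dualNormal, Matrix.mulVec_mulVec, Matrix.mul_nonsing_inv _ hT.isUnit, Matrix.one_mulVec]
  exact congrFun h i

theorem dotProduct_dualNormal (hT : (basisMatrix x T).det ≠ 0) (y z : Fin n → ℝ) :
    z ⬝ᵥ dualNormal x T y = ∑ i, SignType.sign (basicCoords x T y i) * basicCoords x T z i := by
  conv_lhs => rw [← sum_basicCoords_smul hT z]
  simp only [sum_dotProduct, smul_dotProduct, dotProduct_dualNormal_basis hT, smul_eq_mul, mul_comm]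

theorem dotProduct_dualNormal_self (hT : (basisMatrix x T).det ≠ 0) (y : Fin n → ℝ) :
    y ⬝ᵥ dualNormal x T y = ∑ i, |basicCoords x T y i| := by
  simp only [dotProduct_dualNormal hT, sign_mul_self]

theorem abs_dotProduct_dualNormal_basis_le (hT : (basisMatrix x T).det ≠ 0) (y : Fin n → ℝ)
    (i : Fin n) : |x (T i) ⬝ᵥ dualNormal x T y| ≤ 1 := by
  rw [dotProduct_dualNormal_basis hT]
  rcases SignType.sign (basicCoords x T y i) with _ | _ | _ <;> simp

theorem IsOptimalBasis.abs_dotProduct_le (hT : (basisMatrix x T).det ≠ 0)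
    (hopt : IsOptimalBasis x T y) (l : Fin N) : |x l ⬝ᵥ dualNormal x T y| ≤ 1 := by
  by_cases hl : l ∈ range T
  · obtain ⟨i, rfl⟩ := hl
    exact abs_dotProduct_dualNormal_basis_le hT y i
  · exact hopt l hl

theorem IsOptimalBasis.sum_abs_le (hT : (basisMatrix x T).det ≠ 0)
    (hopt : IsOptimalBasis x T y) {c : Fin N → ℝ} (hc : ∑ l, c l • x l = y) :
    ∑ i, |basicCoords x T y i| ≤ ∑ l, |c l| := by
  rw [← dotProduct_dualNormal_self hT, ← hc]
  exact sum_smul_dotProduct_le (hc ▸ hopt.abs_dotProduct_le hT) c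

theorem IsOptimalBasis.mem_symHull_iff (hT : (basisMatrix x T).det ≠ 0)
    (hopt : IsOptimalBasis x T y) : y ∈ symHull x ↔ basicCoords x T y ∈ crossPolytope (Fin n) := by
  constructor
  · rintro ⟨c, hc, hcy⟩
    exact (hopt.sum_abs_le hT hcy).trans hc
  · intro hy
    obtain ⟨c, -, -, hcy, hcsum⟩ := exists_coeff_basicCoords hT y
    exact ⟨c, hcsum.trans_le hy, hcy⟩

theorem IsOptimalBasis.unique (hT : (basisMatrix x T).det ≠ 0)
    (hT' : (basisMatrix x T').det ≠ 0) (hslack : ∀ l ∉ range T, |x l ⬝ᵥ dualNormal x T y| ≠ 1)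
    (hcoord : ∀ i, basicCoords x T' y i ≠ 0) (hopt : IsOptimalBasis x T y)
    (hopt' : IsOptimalBasis x T' y) : T' = T := by
  have hsub : range T' ⊆ range T := by
    rintro _ ⟨j, rfl⟩
    by_contra hj
    obtain ⟨c, -, -, hcy, hcsum⟩ := exists_coeff_basicCoords hT y
    obtain ⟨c', hcT', -, hcy', hcsum'⟩ := exists_coeff_basicCoords hT' y
    have hlt : (∑ l, c' l • x l) ⬝ᵥ dualNormal x T y < ∑ l, |c' l| :=
      sum_smul_dotProduct_lt (hopt.abs_dotProduct_le hT) (hcT' j ▸ hcoord j)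
        ((hopt _ hj).lt_of_ne (hslack _ hj))
    have hle := hopt'.sum_abs_le hT' hcy
    rw [hcy', dotProduct_dualNormal_self hT] at hlt
    linarith
  have hrange : range T' = range T := Set.eq_of_subset_of_ncard_le hsub (by
    simp [Set.ncard_range_of_injective, T.injective, T'.injective])
  exact DFunLike.coe_injective ((T'.strictMono.range_inj T.strictMono).1 hrange)

theorem exists_leaving_index (hT : (basisMatrix x T).det ≠ 0)
    (hcoord : ∀ i, basicCoords x T y i ≠ 0) {z : Fin n → ℝ} (hlt : 1 < |z ⬝ᵥ dualNormal x T y|) :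
    ∃ j, ∃ s : ℝ, basicCoords x T y j = s * basicCoords x T z j ∧
      ∑ i, |basicCoords x T y i - s * basicCoords x T z i| + |s| < ∑ i, |basicCoords x T y i| := by
  obtain ⟨τ, hτ_abs, hτ⟩ : ∃ τ : ℝ, |τ| = 1 ∧
      |z ⬝ᵥ dualNormal x T y| = τ * (z ⬝ᵥ dualNormal x T y) :=
    (abs_choice (z ⬝ᵥ dualNormal x T y)).elim (fun h => ⟨1, by simp, by simp [h]⟩)
      fun h => ⟨-1, by simp, by simp [h]⟩
  have hsum : ∑ i, SignType.sign (basicCoords x T y i) * (τ * basicCoords x T z i) =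
      |z ⬝ᵥ dualNormal x T y| := by
    rw [hτ, dotProduct_dualNormal hT, Finset.mul_sum]
    simp only [mul_left_comm]
  obtain ⟨j, t, ht, hj, habs⟩ := exists_ratio_test hcoord (hsum ▸ zero_lt_one.trans hlt)
  refine ⟨j, t * τ, by rw [hj, mul_assoc], ?_⟩
  calc ∑ i, |basicCoords x T y i - t * τ * basicCoords x T z i| + |t * τ|
      = ∑ i, |basicCoords x T y i| - t * |z ⬝ᵥ dualNormal x T y| + t := by
        rw [abs_mul, hτ_abs, abs_of_pos ht, mul_one]
        simp only [mul_assoc, habs, Finset.sum_sub_distrib, ← Finset.mul_sum, hsum]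
    _ < ∑ i, |basicCoords x T y i| := by nlinarith

/-- Pivoting: `l` enters the basis and the index found by the ratio test leaves it. -/
theorem exists_sum_abs_basicCoords_lt (hdet : ∀ T, (basisMatrix x T).det ≠ 0)
    (hcoord : ∀ i, basicCoords x T y i ≠ 0) {l : Fin N}
    (hlt : 1 < |x l ⬝ᵥ dualNormal x T y|) :
    ∃ T', ∑ i, |basicCoords x T' y i| < ∑ i, |basicCoords x T y i| := by
  have hl : l ∉ range T := by
    rintro ⟨i, rfl⟩
    exact hlt.not_ge (abs_dotProduct_dualNormal_basis_le (hdet T) y i)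
  obtain ⟨j, s, hj, hs⟩ := exists_leaving_index (hdet T) hcoord hlt
  obtain ⟨T', hT'⟩ := exists_orderEmbedding_range_exchange T hl j
  obtain ⟨a, haT, haoff, hay, -⟩ := exists_coeff_basicCoords (hdet T) y
  obtain ⟨b, hbT, hboff, hbx, -⟩ := exists_coeff_basicCoords (hdet T) (x l)
  set c : Fin N → ℝ := a - s • b + Pi.single l s with hc
  have hcy : ∑ m, c m • x m = y := by
    simp only [hc, Pi.add_apply, Pi.sub_apply, Pi.smul_apply, smul_eq_mul, add_smul, sub_smul,
      mul_smul, Finset.sum_add_distrib, Finset.sum_sub_distrib, ← Finset.smul_sum,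
      hay, hbx]
    simp [Pi.single_apply]
  have hcoff : ∀ m ∉ range T', c m = 0 := by
    intro m hm
    rw [hT', mem_insert_iff, not_or, mem_sdiff, not_and_not_right] at hm
    by_cases hmT : m ∈ range T
    · obtain rfl : m = T j := hm.2 hmT
      simp [hc, haT, hbT, hm.1, hj]
    · simp [hc, haoff m hmT, hboff m hmT, hm.1]
  refine ⟨T', ?_⟩
  calc ∑ i, |basicCoords x T' y i| = ∑ m, |c m| := sum_abs_basicCoords (hdet T') hcy hcoff
    _ ≤ ∑ m, |a m - s * b m| + ∑ m, |(Pi.single l s : Fin N → ℝ) m| := by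
        rw [← Finset.sum_add_distrib]
        exact Finset.sum_le_sum fun m _ => abs_add_le _ _
    _ = ∑ i, |basicCoords x T y i - s * basicCoords x T (x l) i| + |s| := by
        congr 1
        · exact (Fintype.sum_of_injective T T.injective _ _
            (fun m hm => by simp [haoff m hm, hboff m hm]) fun i => by rw [haT, hbT]).symm
        · simp [Pi.single_apply, apply_ite abs]
    _ < ∑ i, |basicCoords x T y i| := hs

theorem exists_isOptimalBasis (hn : n ≤ N) (hdet : ∀ T, (basisMatrix x T).det ≠ 0)
    (hcoord : ∀ T i, basicCoords x T y i ≠ 0) : ∃ T, IsOptimalBasis x T y := by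
  have : Nonempty (Fin n ↪o Fin N) := ⟨Fin.castLEOrderEmb hn⟩
  obtain ⟨T, hT⟩ := Finite.exists_min fun T => ∑ i, |basicCoords x T y i|
  refine ⟨T, fun l _ => ?_⟩
  by_contra! hlt
  obtain ⟨T', hT'⟩ := exists_sum_abs_basicCoords_lt hdet (hcoord T) hlt
  exact (hT T').not_gt hT'

end Basis

section NullSets

theorem measure_eq_zero_of_null_lines {F : Type*} [NormedAddCommGroup F] [NormedSpace ℝ F]
    [MeasurableSpace F] [BorelSpace F] [SecondCountableTopology F] (μ : Measure F) [SFinite μ]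
    [μ.IsAddRightInvariant] {S : Set F} (hS : MeasurableSet S) (v : F)
    (h : ∀ x, volume {t : ℝ | x + t • v ∈ S} = 0) : μ S = 0 := by
  have hm : MeasurableSet {p : ℝ × F | p.2 + p.1 • v ∈ S} := by
    have : Measurable fun p : ℝ × F => p.2 + p.1 • v := by fun_prop
    exact this hS
  have hprod : (volume.prod μ) {p : ℝ × F | p.2 + p.1 • v ∈ S} = 0 := by
    rw [Measure.prod_apply_symm hm, lintegral_eq_zero_of_ae_eq_zero]
    exact Filter.Eventually.of_forall h
  have hslice : ∀ t : ℝ, μ (Prod.mk t ⁻¹' {p : ℝ × F | p.2 + p.1 • v ∈ S}) = μ S :=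
    fun t => measure_preimage_add_right μ (t • v) S
  rw [Measure.prod_apply hm] at hprod
  simp only [hslice, lintegral_const] at hprod
  simpa using hprod

variable {m : Type*} [Fintype m]

theorem measurable_det_of [DecidableEq m] :
    Measurable fun W : m → m → ℝ => (Matrix.of W).det :=
  (Continuous.matrix_det (by fun_prop)).measurable

theorem ae_det_ne_zero [DecidableEq m] : ∀ᵐ W : m → m → ℝ, (Matrix.of W).det ≠ 0 := by
  rw [ae_iff]
  simp only [not_not]
  refine measure_eq_zero_of_null_lines _ (measurable_det_of (measurableSet_singleton 0))
    (fun i j => (1 : Matrix m m ℝ) i j) fun W => ?_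
  refine (((-Matrix.of W).charpoly.rootSet_finite ℝ).subset fun t ht => ?_).measure_zero _
  rw [Polynomial.mem_rootSet, Polynomial.coe_aeval_eq_eval, Matrix.eval_charpoly]
  refine ⟨(Matrix.charpoly_monic _).ne_zero, ?_⟩
  rw [← show (Matrix.of (W + t • fun i j => (1 : Matrix m m ℝ) i j)).det = 0 from ht]
  congr 1
  ext i j
  simp [Matrix.scalar_apply, Matrix.diagonal_apply, Matrix.one_apply, add_comm]

theorem ae_dotProduct_ne (u : m → ℝ) {c : ℝ} (hc : c ≠ 0) : ∀ᵐ z : m → ℝ, z ⬝ᵥ u ≠ c := by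
  rw [ae_iff]
  simp only [not_not]
  rcases eq_or_ne u 0 with rfl | hu
  · simp [hc.symm]
  · have huu : u ⬝ᵥ u ≠ 0 := by simpa using hu
    have hmeas : Measurable fun z : m → ℝ => z ⬝ᵥ u := by unfold dotProduct; fun_prop
    refine measure_eq_zero_of_null_lines _ (hmeas (measurableSet_singleton c)) u fun z => ?_
    refine ((finite_singleton ((c - z ⬝ᵥ u) / (u ⬝ᵥ u))).subset fun t ht => ?_).measure_zero _
    have ht' : z ⬝ᵥ u + t * (u ⬝ᵥ u) = c := by
      simpa [add_dotProduct, smul_dotProduct] using ht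
    rw [mem_singleton_iff, eq_div_iff huu]
    linarith

theorem ae_abs_dotProduct_ne_one (u : m → ℝ) : ∀ᵐ z : m → ℝ, |z ⬝ᵥ u| ≠ 1 := by
  filter_upwards [ae_dotProduct_ne u one_ne_zero, ae_dotProduct_ne u (neg_ne_zero.2 one_ne_zero)]
    with z h₁ h₂ h
  exact ((abs_eq zero_le_one).1 h).elim h₁ h₂

theorem ae_forall_apply_ne_zero : ∀ᵐ v : m → ℝ, ∀ i, v i ≠ 0 := by
  refine ae_all_iff.2 fun i => ?_
  rw [ae_iff]
  simp only [not_not]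
  exact Measure.pi_hyperplane (fun _ : m => (volume : Measure ℝ)) i 0

end NullSets

section Measurability

variable {α : Type*} [MeasurableSpace α] {n : ℕ}

theorem measurable_dotProduct {f g : α → Fin n → ℝ} (hf : Measurable f) (hg : Measurable g) :
    Measurable fun a => f a ⬝ᵥ g a := by
  unfold dotProduct
  fun_prop

theorem measurable_inv_mulVec {W : α → Fin n → Fin n → ℝ} {g : α → Fin n → ℝ}
    (hW : Measurable W) (hg : Measurable g) :
    Measurable fun a => (Matrix.of (W a))⁻¹ *ᵥ g a := by
  have hinv (i j : Fin n) : Measurable fun W : Fin n → Fin n → ℝ => (Matrix.of W)⁻¹ i j := by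
    simp only [Matrix.inv_def, Ring.inverse_eq_inv', Matrix.smul_apply, smul_eq_mul]
    have hadj : Continuous fun W : Fin n → Fin n → ℝ => (Matrix.of W).adjugate :=
      Continuous.matrix_adjugate (by fun_prop)
    exact measurable_det_of.inv.mul (hadj.matrix_elem i j).measurable
  refine measurable_pi_iff.2 fun i => measurable_dotProduct ?_ hg
  exact measurable_pi_iff.2 fun j => (hinv i j).comp hW

theorem measurable_signVec : Measurable (signVec : (Fin n → ℝ) → Fin n → ℝ) := by
  refine measurable_pi_iff.2 fun i => ?_
  have hsign : (fun v : Fin n → ℝ => signVec v i) =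
      fun v => if 0 < v i then 1 else if v i < 0 then -1 else 0 := by
    funext v
    rw [signVec, sign_apply]
    split_ifs <;> simp
  rw [hsign]
  exact .ite (measurableSet_lt measurable_const (measurable_pi_apply i)) measurable_const <|
    .ite (measurableSet_lt (measurable_pi_apply i) measurable_const) measurable_const
      measurable_const

end Measurability

section Decomposition

variable {n N : ℕ} {κ : Type*}

/-- For a basis `W` and further points `z`, the coordinates `v` (in the basis `W`) of those points
of the cross-polytope spanned by `±W` for which `W` is an optimal basis of the family `W, z`. -/
def optimalCoords (W : Fin n → Fin n → ℝ) (z : κ → Fin n → ℝ) : Set (Fin n → ℝ) :=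
  {v ∈ crossPolytope (Fin n) | ∀ l, |z l ⬝ᵥ (Matrix.of W)⁻¹ *ᵥ signVec v| ≤ 1}

/-- General position: bases of points are linearly independent, and no further point lies on one of
the hyperplanes through the points `± x (T i)` (or through some of them, if `ε` has zeros). -/
def InGeneralPosition (x : Fin N → Fin n → ℝ) : Prop :=
  ∀ T : Fin n ↪o Fin N, (basisMatrix x T).det ≠ 0 ∧
    ∀ (ε : Fin n → SignType) (l : ↥(range T)ᶜ),
      |x l ⬝ᵥ (basisMatrix x T)⁻¹ *ᵥ fun i => (ε i : ℝ)| ≠ 1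

theorem measurableSet_optimalCoords [Countable κ] :
    MeasurableSet {p : ((Fin n → Fin n → ℝ) × (κ → Fin n → ℝ)) × (Fin n → ℝ) |
      p.2 ∈ optimalCoords p.1.1 p.1.2} := by
  have hset : {p : ((Fin n → Fin n → ℝ) × (κ → Fin n → ℝ)) × (Fin n → ℝ) |
      p.2 ∈ optimalCoords p.1.1 p.1.2} = Prod.snd ⁻¹' crossPolytope (Fin n) ∩
        ⋂ l, {p | |p.1.2 l ⬝ᵥ (Matrix.of p.1.1)⁻¹ *ᵥ signVec p.2| ≤ 1} := by
    ext
    simp [optimalCoords]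
  rw [hset]
  refine (measurable_snd isClosed_crossPolytope.measurableSet).inter <| .iInter fun l =>
    measurableSet_le (measurable_dotProduct (by fun_prop) ?_).abs measurable_const
  exact measurable_inv_mulVec (by fun_prop) (measurable_signVec.comp measurable_snd)

/-- The family `x`, separated into the points indexed by `T` and the remaining ones. -/
def splitAt (T : Fin n ↪o Fin N) (x : Fin N → Fin n → ℝ) :
    (Fin n → Fin n → ℝ) × (↥(range T)ᶜ → Fin n → ℝ) :=
  (fun i => x (T i), fun l => x l)

theorem measurePreserving_splitAt (T : Fin n ↪o Fin N) : MeasurePreserving (splitAt T) := by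
  classical
  let e : Fin n ⊕ ↥(range T)ᶜ ≃ Fin N :=
    (Equiv.sumCongr (Equiv.ofInjective T T.injective) (Equiv.refl _)).trans (Equiv.Set.sumCompl _)
  exact (volume_measurePreserving_sumPiEquivProdPi fun _ => Fin n → ℝ).comp
    (volume_measurePreserving_piCongrLeft (fun _ => Fin n → ℝ) e).symm

theorem ae_inGeneralPosition : ∀ᵐ x : Fin N → Fin n → ℝ, InGeneralPosition x := by
  refine ae_all_iff.2 fun T => (measurePreserving_splitAt T).quasiMeasurePreserving.ae
    (p := fun p => (Matrix.of p.1).det ≠ 0 ∧ ∀ (ε : Fin n → SignType) (l : ↥(range T)ᶜ),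
      |p.2 l ⬝ᵥ (Matrix.of p.1)⁻¹ *ᵥ fun i => (ε i : ℝ)| ≠ 1) ?_
  refine (Measure.quasiMeasurePreserving_fst.ae ae_det_ne_zero).and <|
    ae_all_iff.2 fun ε => ae_all_iff.2 fun l => ?_
  refine (Measure.measure_prod_null ?_).2 (.of_forall fun W => ?_)
  · have hmeas : Measurable fun p : (Fin n → Fin n → ℝ) × (↥(range T)ᶜ → Fin n → ℝ) =>
        |p.2 l ⬝ᵥ (Matrix.of p.1)⁻¹ *ᵥ fun i => (ε i : ℝ)| :=
      (measurable_dotProduct (by fun_prop) (measurable_inv_mulVec (by fun_prop) (by fun_prop))).abs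
    exact (hmeas (measurableSet_singleton 1).compl).compl
  · have hl := Measure.quasiMeasurePreserving_eval (fun _ => (volume : Measure (Fin n → ℝ))) l
    exact ae_iff.1 (hl.ae (ae_abs_dotProduct_ne_one ((Matrix.of W)⁻¹ *ᵥ fun i => (ε i : ℝ))))

variable {x : Fin N → Fin n → ℝ} {T : Fin n ↪o Fin N}

theorem det_vecMulLinear (A : Matrix (Fin n) (Fin n) ℝ) :
    LinearMap.det A.vecMulLinear = A.det := by
  rw [← Matrix.mulVecLin_transpose, ← Matrix.toLin'_apply', LinearMap.det_toLin',
    Matrix.det_transpose]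

theorem ae_basicCoords_ne_zero (hT : (basisMatrix x T).det ≠ 0) :
    ∀ᵐ y, ∀ i, basicCoords x T y i ≠ 0 := by
  have hdet : LinearMap.det (basisMatrix x T)⁻¹.vecMulLinear ≠ 0 := by
    simpa [det_vecMulLinear] using hT
  exact (Measure.LinearMap.quasiMeasurePreserving volume _ hdet).ae ae_forall_apply_ne_zero

theorem setOf_isOptimalBasis_inter_symHull (hT : (basisMatrix x T).det ≠ 0) :
    {y | y ∈ symHull x ∧ IsOptimalBasis x T y} =
      (basisMatrix x T)⁻¹.vecMulLinear ⁻¹' optimalCoords (splitAt T x).1 (splitAt T x).2 := by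
  ext y
  rw [mem_ofPred_eq, and_congr_left fun hopt => hopt.mem_symHull_iff hT]
  exact and_congr_right fun _ => ⟨fun hopt l => hopt l l.2, fun h l hl => h ⟨l, hl⟩⟩

theorem volume_symHull_inter_optimal (hT : (basisMatrix x T).det ≠ 0) :
    volume {y | y ∈ symHull x ∧ IsOptimalBasis x T y} =
      ENNReal.ofReal |(Matrix.of (splitAt T x).1).det| *
        volume (optimalCoords (splitAt T x).1 (splitAt T x).2) := by
  rw [setOf_isOptimalBasis_inter_symHull hT, Measure.addHaar_preimage_linearMap]
  · simp only [det_vecMulLinear, Matrix.det_nonsing_inv, Ring.inverse_eq_inv', inv_inv]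
    rfl
  · simpa [det_vecMulLinear] using hT

theorem measurableSet_symHull_inter_optimal (hT : (basisMatrix x T).det ≠ 0) :
    MeasurableSet {y | y ∈ symHull x ∧ IsOptimalBasis x T y} := by
  rw [setOf_isOptimalBasis_inter_symHull hT]
  have hcoords : Measurable (basisMatrix x T)⁻¹.vecMulLinear :=
    (LinearMap.continuous_of_finiteDimensional _).measurable
  exact (measurable_const.prodMk hcoords) measurableSet_optimalCoords

theorem volume_symHull (hn : n ≤ N) (hx : InGeneralPosition x) :
    volume (symHull x) = ∑ T : Fin n ↪o Fin N, ENNReal.ofReal |(Matrix.of (splitAt T x).1).det| *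
      volume (optimalCoords (splitAt T x).1 (splitAt T x).2) := by
  have hcoord : ∀ᵐ y, ∀ (T : Fin n ↪o Fin N) i, basicCoords x T y i ≠ 0 :=
    ae_all_iff.2 fun T => ae_basicCoords_ne_zero (hx T).1
  have hunion : symHull x =ᵐ[volume] ⋃ T, {y | y ∈ symHull x ∧ IsOptimalBasis x T y} := by
    filter_upwards [hcoord] with y hy
    refine propext ?_
    change y ∈ symHull x ↔ y ∈ ⋃ T, {y | y ∈ symHull x ∧ IsOptimalBasis x T y}
    simp [exists_isOptimalBasis hn (fun T => (hx T).1) hy]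
  have hdisj : Pairwise fun T T' : Fin n ↪o Fin N => AEDisjoint volume
      {y | y ∈ symHull x ∧ IsOptimalBasis x T y} {y | y ∈ symHull x ∧ IsOptimalBasis x T' y} := by
    refine fun T T' hne => measure_mono_null ?_ (ae_iff.1 hcoord)
    rintro y ⟨⟨-, hopt⟩, ⟨-, hopt'⟩⟩ hy
    refine hne (hopt'.unique (hx T').1 (hx T).1 (fun l hl => ?_) (hy T) hopt)
    exact (hx T').2 (fun i => SignType.sign (basicCoords x T' y i)) ⟨l, hl⟩
  rw [measure_congr hunion, measure_iUnion₀ hdisj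
    fun T => (measurableSet_symHull_inter_optimal (hx T).1).nullMeasurableSet, tsum_fintype]
  exact Finset.sum_congr rfl fun T _ => volume_symHull_inter_optimal (hx T).1

end Decomposition

section MeanVolume

variable {n N : ℕ} {κ : Type*} {B : Set (Fin n → ℝ)}

/-- The volume of the part of `B` in the slab `{z | |z ⬝ᵥ u| ≤ 1}`. -/
def slabVolume (B : Set (Fin n → ℝ)) (u : Fin n → ℝ) : ENNReal :=
  volume {z | z ∈ B ∧ |z ⬝ᵥ u| ≤ 1}

/-- The integral over `n` points `W` of `B` of `|det W|` times the `k`-th power of the volume of the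
part of `B` in the slab between the hyperplane through these points and its reflection; for a
probability measure on `B`, the last factor is the probability that `k` further points are in
that slab. -/
def slabMoment (B : Set (Fin n → ℝ)) (k : ℕ) : ENNReal :=
  ∫⁻ W in univ.pi fun _ : Fin n => B,
    ENNReal.ofReal |(Matrix.of W).det| * slabVolume B ((Matrix.of W)⁻¹ *ᵥ 1) ^ k

theorem measurable_slabVolume (hB : MeasurableSet B) : Measurable (slabVolume B) := by
  have hset : MeasurableSet {p : (Fin n → ℝ) × (Fin n → ℝ) | p.2 ∈ B ∧ |p.2 ⬝ᵥ p.1| ≤ 1} :=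
    (measurable_snd hB).inter <|
      measurableSet_le (measurable_dotProduct measurable_snd measurable_fst).abs measurable_const
  exact measurable_measure_prodMk_left hset

theorem lintegral_volume_optimalCoords [Fintype κ] (W : Fin n → Fin n → ℝ) :
    ∫⁻ z in univ.pi fun _ : κ => B, volume (optimalCoords W z) =
      ∫⁻ v in crossPolytope (Fin n),
        slabVolume B ((Matrix.of W)⁻¹ *ᵥ signVec v) ^ Fintype.card κ := by
  have hmeas : MeasurableSet {p : (κ → Fin n → ℝ) × (Fin n → ℝ) | p.2 ∈ optimalCoords W p.1} := by
    have hmap : Measurable fun p : (κ → Fin n → ℝ) × (Fin n → ℝ) => ((W, p.1), p.2) := by fun_prop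
    exact hmap measurableSet_optimalCoords
  calc ∫⁻ z in univ.pi fun _ : κ => B, volume (optimalCoords W z)
      = (volume.restrict (univ.pi fun _ : κ => B)).prod (volume.restrict (crossPolytope (Fin n)))
          {p | p.2 ∈ optimalCoords W p.1} := by
        rw [Measure.prod_apply hmeas]
        refine lintegral_congr fun z => ?_
        rw [Measure.restrict_apply (measurable_prodMk_left hmeas)]
        exact congrArg volume (inter_eq_left.2 fun v hv => hv.1).symm
    _ = ∫⁻ v in crossPolytope (Fin n),
          slabVolume B ((Matrix.of W)⁻¹ *ᵥ signVec v) ^ Fintype.card κ := by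
        rw [Measure.prod_apply_symm hmeas]
        refine setLIntegral_congr_fun isClosed_crossPolytope.measurableSet fun v hv => ?_
        have hslab : (fun z => (z, v)) ⁻¹' {p | p.2 ∈ optimalCoords W p.1} ∩ univ.pi (fun _ => B) =
            univ.pi fun _ : κ => {z | z ∈ B ∧ |z ⬝ᵥ (Matrix.of W)⁻¹ *ᵥ signVec v| ≤ 1} := by
          ext z
          simp [optimalCoords, hv, forall_and, and_comm]
        simp only [Measure.restrict_apply (measurable_prodMk_right hmeas), hslab]
        simp [slabVolume, volume_pi_pi]

theorem measurable_abs_det_mul_slabVolume_pow {α : Type*} [MeasurableSpace α]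
    (hB : MeasurableSet B) {W : α → Fin n → Fin n → ℝ} {ε : α → Fin n → ℝ} (hW : Measurable W)
    (hε : Measurable ε) (k : ℕ) :
    Measurable fun a =>
      ENNReal.ofReal |(Matrix.of (W a)).det| * slabVolume B ((Matrix.of (W a))⁻¹ *ᵥ ε a) ^ k :=
  (measurable_det_of.comp hW).abs.ennreal_ofReal.mul <|
    ((measurable_slabVolume hB).comp (measurable_inv_mulVec hW hε)).pow_const k

variable {ε : Fin n → ℝ}

theorem measurePreserving_smul_signs (hε : ∀ i, ε i = 1 ∨ ε i = -1) :
    MeasurePreserving fun (W : Fin n → Fin n → ℝ) i => ε i • W i := by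
  refine volume_preserving_pi (f := fun i (w : Fin n → ℝ) => ε i • w) fun i => ?_
  rcases hε i with h | h
  · simp only [h, one_smul]
    exact MeasurePreserving.id _
  · simpa only [h, neg_one_smul] using Measure.measurePreserving_neg volume

theorem smul_signs_preimage_pi (hε : ∀ i, ε i = 1 ∨ ε i = -1) (hsymm : -B = B) :
    (fun (W : Fin n → Fin n → ℝ) i => ε i • W i) ⁻¹' (univ.pi fun _ => B) = univ.pi fun _ => B := by
  ext W
  simp only [mem_preimage, mem_univ_pi]
  refine forall_congr' fun i => ?_
  rcases hε i with h | h
  · simp [h]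
  · rw [h, neg_one_smul, ← mem_neg, hsymm]

/-- Changing the signs of the points preserves `|det|` and turns the hyperplane through the points
`ε i • W i` into the one through the points `W i`. -/
theorem slabMoment_eq_of_signs (hB : MeasurableSet B) (hsymm : -B = B) (k : ℕ)
    (hε : ∀ i, ε i = 1 ∨ ε i = -1) :
    ∫⁻ W in univ.pi fun _ : Fin n => B,
      ENNReal.ofReal |(Matrix.of W).det| * slabVolume B ((Matrix.of W)⁻¹ *ᵥ ε) ^ k =
    slabMoment B k := by
  have hof (W : Fin n → Fin n → ℝ) :
      Matrix.of (fun i => ε i • W i) = Matrix.diagonal ε * Matrix.of W := by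
    ext i j
    simp [Matrix.diagonal_mul]
  have hsq (i : Fin n) : ε i * ε i = 1 := by rcases hε i with h | h <;> simp [h]
  have hinv : (Matrix.diagonal ε)⁻¹ = Matrix.diagonal ε :=
    Matrix.inv_eq_left_inv (by simp [Matrix.diagonal_mul_diagonal, hsq])
  have hdet : |(Matrix.diagonal ε).det| = 1 := by
    rw [Matrix.det_diagonal, Finset.abs_prod]
    exact Finset.prod_eq_one fun i _ => by rcases hε i with h | h <;> simp [h]
  have hmulVec : Matrix.diagonal ε *ᵥ ε = 1 := by
    ext i
    simp [Matrix.mulVec_diagonal, hsq]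
  have hmeas : Measurable fun W : Fin n → Fin n → ℝ =>
      ENNReal.ofReal |(Matrix.of W).det| * slabVolume B ((Matrix.of W)⁻¹ *ᵥ ε) ^ k :=
    measurable_abs_det_mul_slabVolume_pow hB measurable_id measurable_const k
  rw [← (measurePreserving_smul_signs hε).setLIntegral_comp_preimage (.univ_pi fun _ => hB) hmeas,
    smul_signs_preimage_pi hε hsymm, slabMoment]
  refine lintegral_congr fun W => ?_
  rw [hof, Matrix.det_mul, abs_mul, hdet, one_mul, Matrix.mul_inv_rev, hinv,
    ← Matrix.mulVec_mulVec, hmulVec]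

theorem splitAt_preimage_pi (T : Fin n ↪o Fin N) (B : Set (Fin n → ℝ)) :
    splitAt T ⁻¹' ((univ.pi fun _ => B) ×ˢ univ.pi fun _ => B) = univ.pi fun _ : Fin N => B := by
  ext x
  simp only [mem_preimage, mem_prod, mem_univ_pi, splitAt, Subtype.forall]
  refine ⟨fun ⟨hmem, hmem'⟩ l => ?_, fun h => ⟨fun i => h _, fun l _ => h l⟩⟩
  by_cases hl : l ∈ range T
  · obtain ⟨i, rfl⟩ := hl
    exact hmem i
  · exact hmem' l hl

theorem card_compl_range_orderEmbedding (T : Fin n ↪o Fin N) [Fintype ↥(range T)ᶜ] :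
    Fintype.card ↥(range T)ᶜ = N - n := by
  classical
  rw [← Nat.card_eq_fintype_card, Nat.card_coe_set_eq, ncard_compl, Nat.card_eq_fintype_card]
  simp [← image_univ, ncard_image_of_injective _ T.injective, ncard_univ]

theorem card_orderEmbedding_fin : Fintype.card (Fin n ↪o Fin N) = N.choose n := by
  rw [← Nat.card_eq_fintype_card, Nat.card_congr Set.powersetCard.ofFinEmbEquiv]
  simpa [Nat.card_eq_fintype_card] using Set.powersetCard.card (n := n) (α := Fin N)

theorem measurable_abs_det_mul_volume_optimalCoords [Countable κ] :
    Measurable fun p : (Fin n → Fin n → ℝ) × (κ → Fin n → ℝ) =>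
      ENNReal.ofReal |(Matrix.of p.1).det| * volume (optimalCoords p.1 p.2) :=
  (measurable_det_of.comp measurable_fst).abs.ennreal_ofReal.mul
    (measurable_measure_prodMk_left measurableSet_optimalCoords)

theorem lintegral_abs_det_mul_volume_optimalCoords [Fintype κ] (hB : MeasurableSet B)
    (hsymm : -B = B) :
    ∫⁻ p : (Fin n → Fin n → ℝ) × (κ → Fin n → ℝ) in (univ.pi fun _ => B) ×ˢ univ.pi fun _ => B,
        ENNReal.ofReal |(Matrix.of p.1).det| * volume (optimalCoords p.1 p.2) =
      volume (crossPolytope (Fin n)) * slabMoment B (Fintype.card κ) := by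
  have hmeas : Measurable fun p : (Fin n → Fin n → ℝ) × (Fin n → ℝ) =>
      ENNReal.ofReal |(Matrix.of p.1).det| *
        slabVolume B ((Matrix.of p.1)⁻¹ *ᵥ signVec p.2) ^ Fintype.card κ :=
    measurable_abs_det_mul_slabVolume_pow hB measurable_fst
      (measurable_signVec.comp measurable_snd) _
  have hsection (W : Fin n → Fin n → ℝ) :
      ∫⁻ z in univ.pi fun _ : κ => B,
        ENNReal.ofReal |(Matrix.of W).det| * volume (optimalCoords W z) =
        ∫⁻ v in crossPolytope (Fin n), ENNReal.ofReal |(Matrix.of W).det| *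
          slabVolume B ((Matrix.of W)⁻¹ *ᵥ signVec v) ^ Fintype.card κ := by
    rw [lintegral_const_mul' _ _ ENNReal.ofReal_ne_top, lintegral_volume_optimalCoords,
      lintegral_const_mul' _ _ ENNReal.ofReal_ne_top]
  have hsigns : ∀ᵐ v ∂volume.restrict (crossPolytope (Fin n)), ∫⁻ W in univ.pi fun _ : Fin n => B,
      ENNReal.ofReal |(Matrix.of W).det| *
        slabVolume B ((Matrix.of W)⁻¹ *ᵥ signVec v) ^ Fintype.card κ =
      slabMoment B (Fintype.card κ) := by
    filter_upwards [ae_restrict_of_ae ae_forall_apply_ne_zero] with v hv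
    refine slabMoment_eq_of_signs hB hsymm _ fun i => ?_
    rcases (hv i).lt_or_gt with h | h <;> simp [signVec, h]
  rw [Measure.volume_eq_prod,
    setLIntegral_prod _ measurable_abs_det_mul_volume_optimalCoords.aemeasurable]
  simp only [hsection]
  rw [lintegral_lintegral_swap hmeas.aemeasurable, lintegral_congr_ae hsigns, setLIntegral_const,
    mul_comm]

theorem lintegral_volume_symHull (hn : n ≤ N) (hB : MeasurableSet B) (hsymm : -B = B) :
    ∫⁻ x in univ.pi fun _ : Fin N => B, volume (symHull x) =
      N.choose n * (volume (crossPolytope (Fin n)) * slabMoment B (N - n)) := by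
  classical
  have hpi {ι : Type} [Countable ι] : MeasurableSet (univ.pi fun _ : ι => B) := .univ_pi fun _ => hB
  have hmeas (T : Fin n ↪o Fin N) : Measurable fun x =>
      ENNReal.ofReal |(Matrix.of (splitAt T x).1).det| *
      volume (optimalCoords (splitAt T x).1 (splitAt T x).2) :=
    measurable_abs_det_mul_volume_optimalCoords.comp (measurePreserving_splitAt T).measurable
  have hterm (T : Fin n ↪o Fin N) : ∫⁻ x in univ.pi fun _ : Fin N => B,
      ENNReal.ofReal |(Matrix.of (splitAt T x).1).det| *
        volume (optimalCoords (splitAt T x).1 (splitAt T x).2) =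
      volume (crossPolytope (Fin n)) * slabMoment B (N - n) := by
    rw [← splitAt_preimage_pi T B, ← card_compl_range_orderEmbedding T,
      ← lintegral_abs_det_mul_volume_optimalCoords hB hsymm,
      ← (measurePreserving_splitAt T).setLIntegral_comp_preimage (hpi.prod hpi)
        measurable_abs_det_mul_volume_optimalCoords]
  calc ∫⁻ x in univ.pi fun _ : Fin N => B, volume (symHull x)
      = ∫⁻ x in univ.pi fun _ : Fin N => B, ∑ T : Fin n ↪o Fin N,
          ENNReal.ofReal |(Matrix.of (splitAt T x).1).det| *
            volume (optimalCoords (splitAt T x).1 (splitAt T x).2) :=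
        lintegral_congr_ae <| ae_restrict_of_ae <|
          ae_inGeneralPosition.mono fun x hx => volume_symHull hn hx
    _ = ∑ _T : Fin n ↪o Fin N, volume (crossPolytope (Fin n)) * slabMoment B (N - n) := by
        rw [lintegral_finsetSum _ fun T _ => hmeas T]
        exact Finset.sum_congr rfl fun T _ => hterm T
    _ = N.choose n * (volume (crossPolytope (Fin n)) * slabMoment B (N - n)) := by
        simp [card_orderEmbedding_fin]

end MeanVolume

section Ball

variable {n : ℕ}

/-- The closed Euclidean unit ball, as a subset of `Fin n → ℝ` (whose norm is the supremum norm). -/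
def euclideanBall (n : ℕ) : Set (Fin n → ℝ) := {x | x ⬝ᵥ x ≤ 1}

theorem dotProduct_self_ofLp (x : EuclideanSpace ℝ (Fin n)) : x.ofLp ⬝ᵥ x.ofLp = ‖x‖ ^ 2 := by
  rw [EuclideanSpace.norm_sq_eq]
  simp only [dotProduct, Real.norm_eq_abs, sq, abs_mul_abs_self]

theorem ofLp_preimage_euclideanBall :
    (WithLp.ofLp : EuclideanSpace ℝ (Fin n) → Fin n → ℝ) ⁻¹' euclideanBall n =
      Metric.closedBall 0 1 := by
  ext x
  simp [euclideanBall, dotProduct_self_ofLp]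

theorem isClosed_euclideanBall : IsClosed (euclideanBall n) :=
  isClosed_le (by unfold dotProduct; fun_prop) continuous_const

theorem measurableSet_euclideanBall : MeasurableSet (euclideanBall n) :=
  isClosed_euclideanBall.measurableSet

theorem isCompact_euclideanBall : IsCompact (euclideanBall n) := by
  have himage := (isCompact_closedBall (0 : EuclideanSpace ℝ (Fin n)) 1).image
    (PiLp.continuous_ofLp 2 fun _ => ℝ)
  rwa [← ofLp_preimage_euclideanBall, image_preimage_eq _ (WithLp.ofLp_surjective 2)] at himage

theorem vecCons_mem_euclideanBall {t : ℝ} {w : Fin n → ℝ} :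
    Matrix.vecCons t w ∈ euclideanBall (n + 1) ↔ w ⬝ᵥ w ≤ 1 - t ^ 2 := by
  rw [euclideanBall, mem_ofPred_eq, Matrix.cons_dotProduct_cons, le_sub_iff_add_le', sq]

theorem neg_euclideanBall : -euclideanBall n = euclideanBall n := by
  ext x
  simp [euclideanBall]

theorem volume_setOf_dotProduct_self_le {r : ℝ} (hr : 0 ≤ r) :
    volume {w : Fin 2 → ℝ | w ⬝ᵥ w ≤ r} = ENNReal.ofReal (Real.pi * r) := by
  have hmeas : MeasurableSet {w : Fin 2 → ℝ | w ⬝ᵥ w ≤ r} :=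
    measurableSet_le (measurable_dotProduct measurable_id measurable_id) measurable_const
  have hball : (WithLp.ofLp : EuclideanSpace ℝ (Fin 2) → Fin 2 → ℝ) ⁻¹' {w | w ⬝ᵥ w ≤ r} =
      Metric.closedBall 0 √r := by
    ext w
    rw [mem_preimage, mem_ofPred_eq, dotProduct_self_ofLp, mem_closedBall_zero_iff,
      Real.le_sqrt (norm_nonneg w) hr]
  rw [← (PiLp.volume_preserving_ofLp (Fin 2)).measure_preimage hmeas.nullMeasurableSet, hball,
    EuclideanSpace.volume_closedBall_fin_two, ← ENNReal.ofReal_pow (Real.sqrt_nonneg _),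
    Real.sq_sqrt hr, mul_comm Real.pi, ENNReal.ofReal_mul hr]

theorem slabVolume_euclideanBall_eq {u v : Fin n → ℝ} (huv : u ⬝ᵥ u = v ⬝ᵥ v) :
    slabVolume (euclideanBall n) u = slabVolume (euclideanBall n) v := by
  let u' : EuclideanSpace ℝ (Fin n) := WithLp.toLp 2 u
  let v' : EuclideanSpace ℝ (Fin n) := WithLp.toLp 2 v
  have hnorm : ‖u'‖ = ‖v'‖ := by
    rw [← sq_eq_sq₀ (norm_nonneg _) (norm_nonneg _), ← dotProduct_self_ofLp,
      ← dotProduct_self_ofLp]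
    exact huv
  let R := (ℝ ∙ (u' - v'))ᗮ.reflection
  have hdot (z : EuclideanSpace ℝ (Fin n)) : (R z).ofLp ⬝ᵥ v = z.ofLp ⬝ᵥ u := by
    have hinner : inner ℝ (R z) (R u') = inner ℝ z u' := R.inner_map_map z u'
    rw [show R u' = v' from Submodule.reflection_sub hnorm] at hinner
    simpa [EuclideanSpace.inner_eq_star_dotProduct, dotProduct_comm, u', v'] using hinner
  have hball (z : EuclideanSpace ℝ (Fin n)) :
      (R z).ofLp ∈ euclideanBall n ↔ z.ofLp ∈ euclideanBall n := by
    simp [euclideanBall, dotProduct_self_ofLp]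
  have hslab (w : Fin n → ℝ) : MeasurableSet {z | z ∈ euclideanBall n ∧ |z ⬝ᵥ w| ≤ 1} :=
    measurableSet_euclideanBall.inter <| measurableSet_le
      (measurable_dotProduct measurable_id measurable_const).abs measurable_const
  have hofLp := PiLp.volume_preserving_ofLp (Fin n)
  rw [slabVolume, slabVolume, ← hofLp.measure_preimage (hslab u).nullMeasurableSet,
    ← hofLp.measure_preimage (hslab v).nullMeasurableSet,
    ← R.measurePreserving.measure_preimage (hofLp.measurable (hslab v)).nullMeasurableSet]
  simp only [preimage_ofPred_eq, hball, hdot]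

theorem measurePreserving_vecCons :
    MeasurePreserving fun x : ℝ × (Fin n → ℝ) => Matrix.vecCons x.1 x.2 := by
  convert (volume_preserving_piFinSuccAbove (fun _ : Fin (n + 1) => ℝ) 0).symm with x
  exact (Fin.insertNth_zero' x.1 x.2).symm

theorem volume_eq_lintegral_vecCons {S : Set (Fin (n + 1) → ℝ)} (hS : MeasurableSet S) :
    volume S = ∫⁻ t : ℝ, volume {w : Fin n → ℝ | Matrix.vecCons t w ∈ S} := by
  rw [← measurePreserving_vecCons.measure_preimage hS.nullMeasurableSet, Measure.volume_eq_prod,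
    Measure.prod_apply (measurePreserving_vecCons.measurable hS)]
  rfl

theorem volume_euclideanBall_three_inter_slab {h : ℝ} (h0 : 0 ≤ h) (h1 : h ≤ 1) :
    volume {z | z ∈ euclideanBall 3 ∧ |z 0| ≤ h} =
      ENNReal.ofReal (2 * Real.pi / 3 * (3 * h - h ^ 3)) := by
  have hmeas : MeasurableSet {z | z ∈ euclideanBall 3 ∧ |z 0| ≤ h} :=
    measurableSet_euclideanBall.inter <| measurableSet_le
      (f := fun z : Fin 3 → ℝ => |z 0|) (by fun_prop) measurable_const
  have hnonneg {t : ℝ} (ht : |t| ≤ h) : 0 ≤ 1 - t ^ 2 := by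
    rw [sub_nonneg, sq_le_one_iff_abs_le_one]
    exact ht.trans h1
  have hslice (t : ℝ) : volume {w : Fin 2 → ℝ | Matrix.vecCons t w ∈ euclideanBall 3 ∧ |t| ≤ h} =
      (Icc (-h) h).indicator (fun t => ENNReal.ofReal (Real.pi * (1 - t ^ 2))) t := by
    by_cases ht : |t| ≤ h
    · have hmem : t ∈ Icc (-h) h := abs_le.1 ht
      rw [indicator_of_mem hmem, ← volume_setOf_dotProduct_self_le (hnonneg ht)]
      simp [vecCons_mem_euclideanBall, ht]
    · have hmem : t ∉ Icc (-h) h := fun hmem => ht (abs_le.2 hmem)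
      simp [hmem, ht]
  have hint : ∫ t in (-h)..h, Real.pi * (1 - t ^ 2) = 2 * Real.pi / 3 * (3 * h - h ^ 3) := by
    rw [intervalIntegral.integral_const_mul, intervalIntegral.integral_sub (by simp) (by simp)]
    simp only [intervalIntegral.integral_const, sub_neg_eq_add, smul_eq_mul, mul_one, integral_pow,
      Nat.reduceAdd, Nat.cast_ofNat]
    ring
  rw [volume_eq_lintegral_vecCons hmeas]
  simp only [mem_ofPred_eq, Matrix.cons_val_zero, hslice]
  rw [lintegral_indicator measurableSet_Icc, ← hint, intervalIntegral.integral_of_le (by linarith),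
    ← integral_Icc_eq_integral_Ioc, ofReal_integral_eq_lintegral_ofReal]
  · exact Continuous.integrableOn_Icc (by fun_prop)
  · filter_upwards [ae_restrict_mem measurableSet_Icc] with t ht
    exact mul_nonneg Real.pi_nonneg (hnonneg (abs_le.2 ht))

theorem slabVolume_euclideanBall_three {u : Fin 3 → ℝ} {h : ℝ} (h0 : 0 < h) (h1 : h ≤ 1)
    (hu : u ⬝ᵥ u = (h⁻¹) ^ 2) :
    slabVolume (euclideanBall 3) u = ENNReal.ofReal (2 * Real.pi / 3 * (3 * h - h ^ 3)) := by
  have hcoord : u ⬝ᵥ u = Pi.single 0 h⁻¹ ⬝ᵥ (Pi.single 0 h⁻¹ : Fin 3 → ℝ) := by simp [hu, sq]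
  rw [slabVolume_euclideanBall_eq hcoord, ← volume_euclideanBall_three_inter_slab h0.le h1]
  simp [slabVolume, abs_of_pos h0, ← div_eq_mul_inv, abs_div, div_le_one h0]

end Ball

section GraphCoordinates

variable {n : ℕ}

/-- The rows `(1, pᵢ)`; up to sign, the determinant of this matrix is `n!` times the volume of the
simplex with vertices `pᵢ`. -/
def affineMatrix (p : Fin (n + 1) → Fin n → ℝ) : Matrix (Fin (n + 1)) (Fin (n + 1)) ℝ :=
  Matrix.of fun i => Matrix.vecCons 1 (p i)

/-- The points above the `pᵢ` on the hyperplane `{x | x₀ = b + a ⬝ᵥ (x₁, …, xₙ)}`. -/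
def graphPoints (b : ℝ) (a : Fin n → ℝ) (p : Fin (n + 1) → Fin n → ℝ) :
    Fin (n + 1) → Fin (n + 1) → ℝ :=
  fun i => Matrix.vecCons (b + a ⬝ᵥ p i) (p i)

theorem affineMatrix_mulVec_vecCons (p : Fin (n + 1) → Fin n → ℝ) (b : ℝ) (a : Fin n → ℝ)
    (i : Fin (n + 1)) : (affineMatrix p *ᵥ Matrix.vecCons b a) i = b + a ⬝ᵥ p i := by
  simp [affineMatrix, Matrix.mulVec, dotProduct_comm]

theorem det_affineMatrix (p : Fin (n + 1) → Fin n → ℝ) :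
    (affineMatrix p).det = (Matrix.of fun i : Fin n => p i.succ - p 0).det := by
  let c : Fin (n + 1) → ℝ := Matrix.vecCons 0 1
  let A := Matrix.of fun i j => affineMatrix p i j - c i * affineMatrix p 0 j
  have hminor : A.submatrix Fin.succ Fin.succ = Matrix.of fun i : Fin n => p i.succ - p 0 := by
    ext i j
    simp [A, c, affineMatrix]
  have hA : A.det = (Matrix.of fun i : Fin n => p i.succ - p 0).det := by
    have hcol (i : Fin n) : A i.succ 0 = 0 := by simp [A, c, affineMatrix]
    have hcorner : A 0 0 = 1 := by simp [A, c, affineMatrix]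
    rw [Matrix.det_succ_column_zero, Fin.sum_univ_succ]
    simp [hcol, hcorner, hminor]
  rw [← hA]
  exact Matrix.det_eq_of_forall_row_eq_smul_add_const c 0 rfl fun i j => by simp [A, c]

theorem ae_det_affineMatrix_ne_zero :
    ∀ᵐ p : Fin (n + 1) → Fin n → ℝ, (affineMatrix p).det ≠ 0 := by
  let edges : (Fin (n + 1) → Fin n → ℝ) →ₗ[ℝ] Fin n → Fin n → ℝ :=
    LinearMap.pi fun i =>
      (LinearMap.proj i.succ : (Fin (n + 1) → Fin n → ℝ) →ₗ[ℝ] Fin n → ℝ) - LinearMap.proj 0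
  have hedges : Function.Surjective edges := fun w =>
    ⟨Matrix.vecCons 0 w, by ext; simp [edges]⟩
  have hdet := (ae_comp_linearMap_mem_iff edges volume volume hedges
    (measurable_det_of (measurableSet_singleton (0 : ℝ)).compl)).2 ae_det_ne_zero
  filter_upwards [hdet] with p hp
  rwa [det_affineMatrix]

theorem det_graphPoints (b : ℝ) (a : Fin n → ℝ) (p : Fin (n + 1) → Fin n → ℝ) :
    (Matrix.of (graphPoints b a p)).det = b * (affineMatrix p).det := by
  have hcol : Matrix.of (graphPoints b a p) =
      (affineMatrix p).updateCol 0 (affineMatrix p *ᵥ Matrix.vecCons b a) := by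
    ext i j
    refine j.cases ?_ fun j => ?_
    · simp [graphPoints, affineMatrix_mulVec_vecCons]
    · simp [graphPoints, affineMatrix]
  rw [hcol, ← Matrix.cramer_apply, Matrix.cramer_eq_adjugate_mulVec, Matrix.mulVec_mulVec,
    Matrix.adjugate_mul, Matrix.smul_mulVec, Matrix.one_mulVec]
  simp [mul_comm]

theorem inv_graphPoints_mulVec_one {b : ℝ} {p : Fin (n + 1) → Fin n → ℝ} (hb : b ≠ 0)
    (hp : (affineMatrix p).det ≠ 0) (a : Fin n → ℝ) :
    (Matrix.of (graphPoints b a p))⁻¹ *ᵥ 1 = b⁻¹ • Matrix.vecCons 1 (-a) := by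
  have hdet : IsUnit (Matrix.of (graphPoints b a p)).det := by
    rw [det_graphPoints]
    exact (mul_ne_zero hb hp).isUnit
  have hone : Matrix.of (graphPoints b a p) *ᵥ (b⁻¹ • Matrix.vecCons 1 (-a)) = 1 := by
    ext i
    simp only [Matrix.mulVec, Matrix.of_apply, graphPoints, dotProduct_comm a, Matrix.smul_cons,
      smul_eq_mul, mul_one, smul_neg, Matrix.dotProduct_cons, Matrix.head_cons, Matrix.tail_cons,
      dotProduct_neg, dotProduct_smul, Pi.one_apply]
    field_simp
    ring
  rw [← hone, Matrix.mulVec_mulVec, Matrix.nonsing_inv_mul _ hdet, Matrix.one_mulVec]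

theorem lintegral_eq_abs_det_mul_lintegral_comp {V : Type*} [NormedAddCommGroup V]
    [NormedSpace ℝ V] [FiniteDimensional ℝ V] [MeasurableSpace V] [BorelSpace V] (μ : Measure V)
    [μ.IsAddHaarMeasure] {A : V →ₗ[ℝ] V} (hA : LinearMap.det A ≠ 0) (f : V → ENNReal) :
    ∫⁻ x, f x ∂μ = ENNReal.ofReal |LinearMap.det A| * ∫⁻ x, f (A x) ∂μ := by
  have hemb : MeasurableEmbedding A :=
    (A.equivOfDetNeZero hA).toContinuousLinearEquiv.toHomeomorph.measurableEmbedding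
  rw [← hemb.lintegral_map, Measure.map_linearMap_addHaar_eq_smul_addHaar μ hA,
    lintegral_smul_measure, smul_eq_mul, ← mul_assoc, ← ENNReal.ofReal_mul (abs_nonneg _), abs_inv,
    mul_inv_cancel₀ (abs_ne_zero.2 hA), ENNReal.ofReal_one, one_mul]

theorem measurable_vecCons {α : Type*} [MeasurableSpace α] {f : α → ℝ} {g : α → Fin n → ℝ}
    (hf : Measurable f) (hg : Measurable g) : Measurable fun x => Matrix.vecCons (f x) (g x) :=
  measurable_pi_iff.2 <| Fin.cases hf fun i => measurable_pi_iff.1 hg i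

theorem measurable_graphPoints {α : Type*} [MeasurableSpace α] {b : α → ℝ} {a : α → Fin n → ℝ}
    {p : α → Fin (n + 1) → Fin n → ℝ} (hb : Measurable b) (ha : Measurable a) (hp : Measurable p) :
    Measurable fun x => graphPoints (b x) (a x) (p x) :=
  measurable_pi_iff.2 fun i => measurable_vecCons
    (hb.add (measurable_dotProduct ha (by fun_prop))) (by fun_prop)

theorem measurable_det_affineMatrix :
    Measurable fun p : Fin (n + 1) → Fin n → ℝ => (affineMatrix p).det :=
  measurable_det_of.comp <| measurable_pi_iff.2 fun i =>
    measurable_vecCons measurable_const (measurable_pi_apply i)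

theorem lintegral_vecCons_rows {f : (Fin (n + 1) → Fin (n + 1) → ℝ) → ENNReal}
    (hf : Measurable f) :
    ∫⁻ W, f W = ∫⁻ p : Fin (n + 1) → Fin n → ℝ, ∫⁻ q : Fin (n + 1) → ℝ,
      f fun i => Matrix.vecCons (q i) (p i) := by
  let e := (MeasurableEquiv.piCongrRight fun _ : Fin (n + 1) =>
    MeasurableEquiv.piFinSuccAbove (fun _ : Fin (n + 1) => ℝ) 0).trans
      (MeasurableEquiv.arrowProdEquivProdArrow ℝ (Fin n → ℝ) (Fin (n + 1)))
  have he : MeasurePreserving e :=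
    (volume_measurePreserving_arrowProdEquivProdArrow ℝ (Fin n → ℝ) (Fin (n + 1))).comp
      (volume_preserving_pi fun _ => volume_preserving_piFinSuccAbove (fun _ => ℝ) 0)
  have hsymm (q : Fin (n + 1) → ℝ) (p : Fin (n + 1) → Fin n → ℝ) :
      e.symm (q, p) = fun i => Matrix.vecCons (q i) (p i) :=
    (MeasurableEquiv.symm_apply_eq e).2 rfl
  rw [← he.symm.lintegral_comp hf, Measure.volume_eq_prod,
    lintegral_prod_symm _ (by exact (hf.comp e.symm.measurable).aemeasurable)]
  simp only [hsymm]

theorem lintegral_vecCons_eq_lintegral_graphPoints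
    {f : (Fin (n + 1) → Fin (n + 1) → ℝ) → ENNReal} (hf : Measurable f)
    {p : Fin (n + 1) → Fin n → ℝ} (hp : (affineMatrix p).det ≠ 0) :
    ∫⁻ q : Fin (n + 1) → ℝ, f (fun i => Matrix.vecCons (q i) (p i)) =
      ∫⁻ x : ℝ × (Fin n → ℝ), ENNReal.ofReal |(affineMatrix p).det| *
        f (graphPoints x.1 x.2 p) := by
  have hcons : Measurable fun q : Fin (n + 1) → ℝ => f fun i => Matrix.vecCons (q i) (p i) :=
    hf.comp <| measurable_pi_iff.2 fun i => measurable_vecCons (by fun_prop) measurable_const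
  have hdet : LinearMap.det (Matrix.toLin' (affineMatrix p)) ≠ 0 := by
    rwa [LinearMap.det_toLin']
  have hmul : Measurable fun α : Fin (n + 1) → ℝ =>
      f fun i => Matrix.vecCons (Matrix.toLin' (affineMatrix p) α i) (p i) :=
    hcons.comp (Matrix.toLin' (affineMatrix p)).continuous_of_finiteDimensional.measurable
  rw [lintegral_eq_abs_det_mul_lintegral_comp volume hdet, LinearMap.det_toLin',
    lintegral_const_mul' _ _ ENNReal.ofReal_ne_top,
    ← measurePreserving_vecCons.lintegral_comp hmul]
  simp only [Matrix.toLin'_apply, affineMatrix_mulVec_vecCons]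
  rfl

theorem lintegral_eq_lintegral_graphPoints {f : (Fin (n + 1) → Fin (n + 1) → ℝ) → ENNReal}
    (hf : Measurable f) :
    ∫⁻ W, f W = ∫⁻ a : Fin n → ℝ, ∫⁻ b : ℝ, ∫⁻ p : Fin (n + 1) → Fin n → ℝ,
      ENNReal.ofReal |(affineMatrix p).det| * f (graphPoints b a p) := by
  have hmeas : Measurable fun x : (ℝ × (Fin n → ℝ)) × (Fin (n + 1) → Fin n → ℝ) =>
      ENNReal.ofReal |(affineMatrix x.2).det| * f (graphPoints x.1.1 x.1.2 x.2) :=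
    (measurable_det_affineMatrix.comp measurable_snd).abs.ennreal_ofReal.mul
      (hf.comp (measurable_graphPoints (by fun_prop) (by fun_prop) (by fun_prop)))
  calc ∫⁻ W, f W
      = ∫⁻ p : Fin (n + 1) → Fin n → ℝ, ∫⁻ x : ℝ × (Fin n → ℝ),
          ENNReal.ofReal |(affineMatrix p).det| * f (graphPoints x.1 x.2 p) := by
        rw [lintegral_vecCons_rows hf]
        exact lintegral_congr_ae <| ae_det_affineMatrix_ne_zero.mono fun p hp =>
          lintegral_vecCons_eq_lintegral_graphPoints hf hp
    _ = ∫⁻ x : ℝ × (Fin n → ℝ), ∫⁻ p : Fin (n + 1) → Fin n → ℝ,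
          ENNReal.ofReal |(affineMatrix p).det| * f (graphPoints x.1 x.2 p) :=
        lintegral_lintegral_swap (hmeas.comp measurable_swap).aemeasurable
    _ = ∫⁻ a : Fin n → ℝ, ∫⁻ b : ℝ, ∫⁻ p : Fin (n + 1) → Fin n → ℝ,
          ENNReal.ofReal |(affineMatrix p).det| * f (graphPoints b a p) := by
        rw [Measure.volume_eq_prod]
        exact lintegral_prod_symm _ hmeas.lintegral_prod_right'.aemeasurable

end GraphCoordinates

section Andreief

variable {α ι : Type*} [MeasurableSpace α] [Fintype ι] [DecidableEq ι]
  {μ : Measure α} [SigmaFinite μ]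

theorem det_of_eq_sum_prod (A : ι → ι → ℝ) :
    (Matrix.of A).det = ∑ σ : Equiv.Perm ι, (σ.sign : ℝ) * ∏ i, A i (σ i) := by
  rw [← Matrix.det_transpose, Matrix.det_apply']
  rfl

theorem integrable_det_of {g : ι → ι → α → ℝ} (hg : ∀ i j, Integrable (g i j) μ) :
    Integrable (fun x : ι → α => (Matrix.of fun i j => g i j (x i)).det)
      (Measure.pi fun _ => μ) := by
  simp only [det_of_eq_sum_prod]
  exact integrable_finsetSum _ fun σ _ =>
    (Integrable.fintype_prod fun i => hg i (σ i)).const_mul _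

theorem integral_det_of {g : ι → ι → α → ℝ} (hg : ∀ i j, Integrable (g i j) μ) :
    ∫ x : ι → α, (Matrix.of fun i j => g i j (x i)).det ∂Measure.pi (fun _ => μ) =
      (Matrix.of fun i j => ∫ y, g i j y ∂μ).det := by
  simp only [det_of_eq_sum_prod]
  rw [integral_finsetSum _ fun σ _ =>
    (Integrable.fintype_prod fun i => hg i (σ i)).const_mul _]
  simp only [integral_const_mul]
  exact Finset.sum_congr rfl fun σ _ => by
    rw [integral_fintype_prod_eq_prod fun i => g i (σ i)]

theorem det_sq_eq_sum_det (A : Matrix ι ι ℝ) :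
    A.det ^ 2 = ∑ σ : Equiv.Perm ι,
      (σ.sign : ℝ) * (Matrix.of fun i j => A i (σ i) * A i j).det := by
  simp only [Matrix.det_mul_column]
  rw [sq]
  nth_rw 1 [← Matrix.det_transpose]
  rw [Matrix.det_apply', Finset.sum_mul]
  simp [mul_assoc]

-- Andréief's identity.
theorem integral_det_sq {f : ι → α → ℝ} (hf : ∀ i j, Integrable (fun y => f i y * f j y) μ) :
    ∫ x : ι → α, (Matrix.of fun i j => f j (x i)).det ^ 2 ∂Measure.pi (fun _ => μ) =
      (Fintype.card ι)! * (Matrix.of fun i j => ∫ y, f i y * f j y ∂μ).det := by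
  let G : Matrix ι ι ℝ := Matrix.of fun i j => ∫ y, f i y * f j y ∂μ
  have hG (σ : Equiv.Perm ι) :
      ∫ x : ι → α, (Matrix.of fun i j => f (σ i) (x i) * f j (x i)).det
        ∂Measure.pi (fun _ => μ) = σ.sign * G.det := by
    rw [integral_det_of fun i j => hf (σ i) j, ← Matrix.det_permute]
    rfl
  have hsign (σ : Equiv.Perm ι) : (σ.sign : ℝ) * (σ.sign * G.det) = G.det := by
    rw [← mul_assoc]
    norm_cast
    rw [Int.units_mul_self, Units.val_one, Int.cast_one, one_mul]
  simp only [det_sq_eq_sum_det, Matrix.of_apply]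
  rw [integral_finsetSum _ fun σ _ => (integrable_det_of fun i j => hf (σ i) j).const_mul _]
  simp [integral_const_mul, hG, hsign, Fintype.card_perm, G]

end Andreief

section BallMoments

theorem setIntegral_closedBall_norm_sq {V : Type*} [NormedAddCommGroup V] [NormedSpace ℝ V]
    [FiniteDimensional ℝ V] [Nontrivial V] [MeasurableSpace V] [BorelSpace V] (μ : Measure V)
    [μ.IsAddHaarMeasure] :
    ∫ x in Metric.closedBall 0 1, ‖x‖ ^ 2 ∂μ =
      Module.finrank ℝ V / (Module.finrank ℝ V + 2) * μ.real (Metric.closedBall 0 1) := by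
  obtain ⟨d, hd⟩ := Nat.exists_eq_succ_of_ne_zero (Module.finrank_pos (R := ℝ) (M := V)).ne'
  have hradial (x : V) : (Metric.closedBall 0 1).indicator (fun x : V => ‖x‖ ^ 2) x =
      (Iic (1 : ℝ)).indicator (fun r => r ^ 2) ‖x‖ := by
    simp [indicator]
  have hpow (r : ℝ) : r ^ d • (Iic (1 : ℝ)).indicator (fun r => r ^ 2) r =
      (Iic (1 : ℝ)).indicator (fun r => r ^ (d + 2)) r := by
    simp [indicator, pow_add]
  rw [← integral_indicator Metric.isClosed_closedBall.measurableSet]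
  simp only [hradial]
  rw [integral_fun_norm_addHaar μ (fun r => (Iic (1 : ℝ)).indicator (fun r => r ^ 2) r), hd,
    Measure.addHaar_real_closedBall_eq_addHaar_real_ball]
  simp only [Nat.succ_eq_add_one, Nat.add_sub_cancel, hpow]
  rw [setIntegral_indicator measurableSet_Iic, Ioi_inter_Iic,
    ← intervalIntegral.integral_of_le zero_le_one, integral_pow]
  simp only [nsmul_eq_mul, smul_eq_mul]
  push_cast
  rw [one_pow, zero_pow (Nat.succ_ne_zero _)]
  ring

theorem setIntegral_closedBall_comp {V : Type*} [NormedAddCommGroup V] [InnerProductSpace ℝ V]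
    [FiniteDimensional ℝ V] [MeasurableSpace V] [BorelSpace V] (R : V ≃ₗᵢ[ℝ] V) (f : V → ℝ)
    (r : ℝ) : ∫ x in Metric.closedBall 0 r, f (R x) = ∫ x in Metric.closedBall 0 r, f x := by
  simpa using R.measurePreserving.setIntegral_preimage_emb
    R.toMeasurableEquiv.measurableEmbedding f (Metric.closedBall 0 r)

variable {n : ℕ}

theorem setIntegral_closedBall_apply (i : Fin n) :
    ∫ x in Metric.closedBall (0 : EuclideanSpace ℝ (Fin n)) 1, x i = 0 := by
  have hneg := setIntegral_closedBall_comp (LinearIsometryEquiv.neg ℝ)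
    (fun x : EuclideanSpace ℝ (Fin n) => x i) 1
  simp only [LinearIsometryEquiv.coe_neg, PiLp.neg_apply, integral_neg] at hneg
  linarith

theorem setIntegral_closedBall_apply_mul_apply_of_ne {i j : Fin n} (hij : i ≠ j) :
    ∫ x in Metric.closedBall (0 : EuclideanSpace ℝ (Fin n)) 1, x i * x j = 0 := by
  have hreflect := setIntegral_closedBall_comp
    (LinearIsometryEquiv.piLpCongrRight 2 fun k : Fin n =>
      if k = i then LinearIsometryEquiv.neg ℝ else LinearIsometryEquiv.refl ℝ ℝ)
    (fun x => x i * x j) 1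
  simp only [LinearIsometryEquiv.piLpCongrRight_apply, ↓reduceIte, LinearIsometryEquiv.coe_neg,
    hij.symm, LinearIsometryEquiv.coe_refl, id_eq, neg_mul, integral_neg] at hreflect
  linarith

theorem setIntegral_closedBall_apply_sq_eq (i j : Fin n) :
    ∫ x in Metric.closedBall (0 : EuclideanSpace ℝ (Fin n)) 1, x i ^ 2 =
      ∫ x in Metric.closedBall (0 : EuclideanSpace ℝ (Fin n)) 1, x j ^ 2 := by
  simpa using setIntegral_closedBall_comp
    (LinearIsometryEquiv.piLpCongrLeft 2 ℝ ℝ (Equiv.swap i j)) (fun x => x j ^ 2) 1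

theorem setIntegral_closedBall_apply_sq (i : Fin n) :
    ∫ x in Metric.closedBall (0 : EuclideanSpace ℝ (Fin n)) 1, x i ^ 2 =
      volume.real (Metric.closedBall (0 : EuclideanSpace ℝ (Fin n)) 1) / (n + 2) := by
  have : NeZero n := ⟨(Fin.pos i).ne'⟩
  have hsum := setIntegral_closedBall_norm_sq
    (volume : Measure (EuclideanSpace ℝ (Fin n)))
  simp only [EuclideanSpace.real_norm_sq_eq] at hsum
  rw [integral_finsetSum _ fun j _ => ContinuousOn.integrableOn_compact
    (isCompact_closedBall _ _) (by fun_prop)] at hsum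
  simp only [setIntegral_closedBall_apply_sq_eq _ i, Finset.sum_const, Finset.card_univ,
    Fintype.card_fin, finrank_euclideanSpace, nsmul_eq_mul] at hsum
  have hn : (n : ℝ) ≠ 0 := NeZero.ne _
  refine mul_left_cancel₀ hn ?_
  rw [hsum]
  ring

theorem setIntegral_euclideanBall (f : (Fin n → ℝ) → ℝ) :
    ∫ w in euclideanBall n, f w =
      ∫ x in Metric.closedBall (0 : EuclideanSpace ℝ (Fin n)) 1, f x := by
  rw [← ofLp_preimage_euclideanBall]
  exact ((PiLp.volume_preserving_ofLp (Fin n)).setIntegral_preimage_emb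
    (MeasurableEquiv.toLp 2 (Fin n → ℝ)).symm.measurableEmbedding f _).symm

theorem volume_closedBall_eq_volume_euclideanBall :
    volume (Metric.closedBall (0 : EuclideanSpace ℝ (Fin n)) 1) = volume (euclideanBall n) := by
  rw [← ofLp_preimage_euclideanBall]
  exact (PiLp.volume_preserving_ofLp (Fin n)).measure_preimage
    measurableSet_euclideanBall.nullMeasurableSet

theorem of_setIntegral_euclideanBall_vecCons_mul_vecCons :
    (Matrix.of fun i j : Fin (n + 1) =>
        ∫ w in euclideanBall n, Matrix.vecCons 1 w i * Matrix.vecCons 1 w j) =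
      Matrix.diagonal (Matrix.vecCons (volume.real (euclideanBall n))
        fun _ => volume.real (euclideanBall n) / (n + 2)) := by
  ext i j
  rw [Matrix.of_apply]
  refine Fin.cases ?_ (fun i => ?_) i <;> refine Fin.cases ?_ (fun j => ?_) j
  · simp
  · simp [setIntegral_euclideanBall fun w => w j, setIntegral_closedBall_apply,
      Matrix.diagonal_apply_ne _ (Fin.succ_ne_zero j).symm]
  · simp [setIntegral_euclideanBall fun w => w i, setIntegral_closedBall_apply]
  · simp only [Matrix.cons_val_succ]
    rw [setIntegral_euclideanBall fun w => w i * w j]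
    rcases eq_or_ne i j with rfl | hij
    · simp [← sq, setIntegral_closedBall_apply_sq, measureReal_def,
        volume_closedBall_eq_volume_euclideanBall]
    · rw [setIntegral_closedBall_apply_mul_apply_of_ne hij,
        Matrix.diagonal_apply_ne _ (by simpa using hij)]

end BallMoments

section SimplexSecondMoment

variable {n : ℕ}

/-- The integral over `(n + 1)`-tuples of points of `S` of the squared volume of the simplex they
span, up to the factor `(n !) ^ 2`. -/
def simplexSecondMoment (S : Set (Fin n → ℝ)) : ENNReal :=
  ∫⁻ p in univ.pi fun _ : Fin (n + 1) => S, ENNReal.ofReal ((affineMatrix p).det ^ 2)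

theorem simplexSecondMoment_euclideanBall :
    simplexSecondMoment (euclideanBall n) = ENNReal.ofReal
      ((n + 1)! * volume.real (euclideanBall n) ^ (n + 1) / (n + 2) ^ n) := by
  have hrow (p : Fin (n + 1) → Fin n → ℝ) :
      affineMatrix p = Matrix.of fun i j => (fun w => Matrix.vecCons 1 w j) (p i) := rfl
  have hgram (i j : Fin (n + 1)) : IntegrableOn (fun w : Fin n → ℝ =>
      Matrix.vecCons 1 w i * Matrix.vecCons 1 w j) (euclideanBall n) :=
    ContinuousOn.integrableOn_compact isCompact_euclideanBall (by fun_prop)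
  have hrestrict : (volume : Measure (Fin (n + 1) → Fin n → ℝ)).restrict
      (univ.pi fun _ => euclideanBall n) =
        Measure.pi fun _ => volume.restrict (euclideanBall n) := by
    rw [volume_pi, Measure.restrict_pi_pi]
  have hint : Integrable (fun p : Fin (n + 1) → Fin n → ℝ => (affineMatrix p).det ^ 2)
      (volume.restrict (univ.pi fun _ => euclideanBall n)) :=
    ContinuousOn.integrableOn_compact (isCompact_univ_pi fun _ => isCompact_euclideanBall)
      (by simp only [hrow]; fun_prop)
  rw [simplexSecondMoment, ← ofReal_integral_eq_lintegral_ofReal hint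
    (Filter.Eventually.of_forall fun p => sq_nonneg _), hrestrict]
  simp only [hrow]
  rw [integral_det_sq hgram, of_setIntegral_euclideanBall_vecCons_mul_vecCons,
    Matrix.det_diagonal, Fin.prod_univ_succ]
  simp only [Matrix.cons_val_zero, Matrix.cons_val_succ, Finset.prod_const, Finset.card_univ,
    Fintype.card_fin, div_pow]
  congr 1
  ring

end SimplexSecondMoment

section AffineChange

variable {n : ℕ}

theorem det_affineMatrix_mulVec_add (M : Matrix (Fin n) (Fin n) ℝ) (d : Fin n → ℝ)
    (p : Fin (n + 1) → Fin n → ℝ) :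
    (affineMatrix fun i => M *ᵥ p i + d).det = M.det * (affineMatrix p).det := by
  have hedges : (Matrix.of fun i : Fin n => M *ᵥ p i.succ + d - (M *ᵥ p 0 + d)) =
      Matrix.of (fun i : Fin n => p i.succ - p 0) * Mᵀ := by
    ext i j
    simp [Matrix.mul_apply, ← Matrix.mulVec_sub, Matrix.mulVec, dotProduct, mul_comm]
  rw [det_affineMatrix, det_affineMatrix, hedges, Matrix.det_mul, Matrix.det_transpose, mul_comm]

theorem lintegral_eq_abs_det_pow_mul_lintegral_mulVec_add {ι : Type*} [Fintype ι]
    {M : Matrix (Fin n) (Fin n) ℝ} (hM : M.det ≠ 0) (d : Fin n → ℝ)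
    (f : (ι → Fin n → ℝ) → ENNReal) :
    ∫⁻ p, f p = ENNReal.ofReal (|M.det| ^ Fintype.card ι) *
      ∫⁻ p : ι → Fin n → ℝ, f fun i => M *ᵥ p i + d := by
  classical
  let A : (ι → Fin n → ℝ) →ₗ[ℝ] ι → Fin n → ℝ :=
    LinearMap.pi fun i => (Matrix.toLin' M).comp (LinearMap.proj i)
  have hA : LinearMap.det A = M.det ^ Fintype.card ι := by
    rw [LinearMap.det_pi]
    simp
  rw [← lintegral_add_right_eq_self f fun _ => d,
    lintegral_eq_abs_det_mul_lintegral_comp volume (by rw [hA]; exact pow_ne_zero _ hM), hA,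
    abs_pow]
  rfl

theorem simplexSecondMoment_eq_abs_det_pow_mul {S : Set (Fin n → ℝ)} (hS : MeasurableSet S)
    {M : Matrix (Fin n) (Fin n) ℝ} (hM : M.det ≠ 0) (d : Fin n → ℝ) :
    simplexSecondMoment S = ENNReal.ofReal (|M.det| ^ (n + 3)) *
      simplexSecondMoment ((fun p => M *ᵥ p + d) ⁻¹' S) := by
  have hpi {T : Set (Fin n → ℝ)} (hT : MeasurableSet T) :
      MeasurableSet (univ.pi fun _ : Fin (n + 1) => T) := .univ_pi fun _ => hT
  have hpre : MeasurableSet ((fun p => M *ᵥ p + d) ⁻¹' S) :=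
    ((Matrix.toLin' M).continuous_of_finiteDimensional.measurable.add_const d) hS
  rw [simplexSecondMoment, simplexSecondMoment, ← lintegral_indicator (hpi hS),
    ← lintegral_indicator (hpi hpre),
    lintegral_eq_abs_det_pow_mul_lintegral_mulVec_add hM d,
    Fintype.card_fin, show n + 3 = n + 1 + 2 from rfl, pow_add _ (n + 1),
    ENNReal.ofReal_mul (by positivity), mul_assoc,
    ← lintegral_const_mul' (ENNReal.ofReal (|M.det| ^ 2)) _ ENNReal.ofReal_ne_top]
  congr 2 with p
  by_cases hp : p ∈ univ.pi fun _ : Fin (n + 1) => (fun p => M *ᵥ p + d) ⁻¹' S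
  · rw [indicator_of_mem hp, indicator_of_mem (by exact hp), det_affineMatrix_mulVec_add, mul_pow,
      ENNReal.ofReal_mul (sq_nonneg _), sq_abs]
  · rw [indicator_of_notMem hp, indicator_of_notMem (by exact hp), mul_zero]

theorem simplexSecondMoment_of_volume_eq_zero {S : Set (Fin n → ℝ)} (hS : volume S = 0) :
    simplexSecondMoment S = 0 := by
  rw [simplexSecondMoment, Measure.restrict_eq_zero.2, lintegral_zero_measure]
  rw [volume_pi_pi, Finset.prod_const, hS]
  simp

end AffineChange

section GraphSection

variable {n : ℕ}

/-- The section of `B` by the hyperplane `{x | x₀ = b + a ⬝ᵥ (x₁, …, xₙ)}`, projected along the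
zeroth coordinate. -/
def graphSection (B : Set (Fin (n + 1) → ℝ)) (b : ℝ) (a : Fin n → ℝ) : Set (Fin n → ℝ) :=
  {p | Matrix.vecCons (b + a ⬝ᵥ p) p ∈ B}

theorem measurableSet_graphSection {B : Set (Fin (n + 1) → ℝ)} (hB : MeasurableSet B) (b : ℝ)
    (a : Fin n → ℝ) : MeasurableSet (graphSection B b a) :=
  measurable_vecCons ((measurable_dotProduct measurable_const measurable_id).const_add b)
    measurable_id hB

theorem graphPoints_mem_pi_iff {B : Set (Fin (n + 1) → ℝ)} {b : ℝ} {a : Fin n → ℝ}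
    {p : Fin (n + 1) → Fin n → ℝ} :
    graphPoints b a p ∈ univ.pi (fun _ => B) ↔ p ∈ univ.pi fun _ => graphSection B b a := by
  rfl

theorem slabMoment_eq_lintegral_graphSection {B : Set (Fin (n + 1) → ℝ)} (hB : MeasurableSet B)
    (k : ℕ) :
    slabMoment B k = ∫⁻ a : Fin n → ℝ, ∫⁻ b : ℝ, ENNReal.ofReal |b| *
      slabVolume B (b⁻¹ • Matrix.vecCons 1 (-a)) ^ k *
        simplexSecondMoment (graphSection B b a) := by
  have hpi : MeasurableSet (univ.pi fun _ : Fin (n + 1) => B) := .univ_pi fun _ => hB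
  have hmeas : Measurable fun W : Fin (n + 1) → Fin (n + 1) → ℝ =>
      ENNReal.ofReal |(Matrix.of W).det| * slabVolume B ((Matrix.of W)⁻¹ *ᵥ 1) ^ k :=
    measurable_abs_det_mul_slabVolume_pow hB measurable_id measurable_const k
  rw [slabMoment, ← lintegral_indicator hpi,
    lintegral_eq_lintegral_graphPoints (hmeas.indicator hpi)]
  refine lintegral_congr fun a => lintegral_congr_ae ?_
  filter_upwards [Measure.ae_ne volume 0] with b hb
  have hsection : MeasurableSet (univ.pi fun _ : Fin (n + 1) => graphSection B b a) :=
    .univ_pi fun _ => measurableSet_graphSection hB b a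
  rw [simplexSecondMoment, ← lintegral_indicator hsection, ← lintegral_const_mul _
    ((measurable_det_affineMatrix.pow_const 2).ennreal_ofReal.indicator hsection)]
  refine lintegral_congr_ae ?_
  filter_upwards [ae_det_affineMatrix_ne_zero] with p hp
  by_cases hmem : p ∈ univ.pi fun _ : Fin (n + 1) => graphSection B b a
  · rw [indicator_of_mem hmem, indicator_of_mem (graphPoints_mem_pi_iff.2 hmem),
      inv_graphPoints_mulVec_one hb hp, det_graphPoints, abs_mul,
      ENNReal.ofReal_mul (abs_nonneg b), ← sq_abs (affineMatrix p).det,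
      ENNReal.ofReal_pow (abs_nonneg _)]
    ring
  · rw [indicator_of_notMem hmem, indicator_of_notMem (graphPoints_mem_pi_iff.not.2 hmem),
      mul_zero, mul_zero]

end GraphSection

section BallSection

variable {n : ℕ}

/-- The positive square root of `1 + a aᵀ`, which straightens the ellipsoids obtained by projecting
the sections of a ball by the hyperplanes `x₀ = b + a ⬝ᵥ (x₁, …, xₙ)`. -/
def stretchMatrix (a : Fin n → ℝ) : Matrix (Fin n) (Fin n) ℝ :=
  1 + (1 + √(1 + a ⬝ᵥ a))⁻¹ • Matrix.vecMulVec a a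

theorem one_add_dotProduct_self_pos (a : Fin n → ℝ) : 0 < 1 + a ⬝ᵥ a := by
  have := dotProduct_self_star_nonneg a
  rw [star_trivial] at this
  linarith

theorem det_stretchMatrix (a : Fin n → ℝ) : (stretchMatrix a).det = √(1 + a ⬝ᵥ a) := by
  have hsq := Real.sq_sqrt (one_add_dotProduct_self_pos a).le
  rw [stretchMatrix, ← Matrix.smul_vecMulVec, Matrix.vecMulVec_eq Unit,
    Matrix.det_one_add_replicateCol_mul_replicateRow, dotProduct_smul, smul_eq_mul]
  field_simp
  linarith

theorem stretchMatrix_mulVec (a y : Fin n → ℝ) :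
    stretchMatrix a *ᵥ y = y + ((1 + √(1 + a ⬝ᵥ a))⁻¹ * (a ⬝ᵥ y)) • a := by
  ext i
  simp only [stretchMatrix, Matrix.add_mulVec, Matrix.one_mulVec, Matrix.smul_mulVec,
    Matrix.vecMulVec_mulVec, op_smul_eq_smul, Pi.add_apply, Pi.smul_apply, smul_eq_mul]
  ring

theorem dotProduct_self_stretchMatrix_mulVec (a y : Fin n → ℝ) :
    (stretchMatrix a *ᵥ y) ⬝ᵥ (stretchMatrix a *ᵥ y) = y ⬝ᵥ y + (a ⬝ᵥ y) ^ 2 := by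
  have hsq := Real.sq_sqrt (one_add_dotProduct_self_pos a).le
  have hpos : 0 < 1 + √(1 + a ⬝ᵥ a) := by positivity
  have haa : a ⬝ᵥ a = √(1 + a ⬝ᵥ a) ^ 2 - 1 := by linarith
  simp only [stretchMatrix_mulVec, add_dotProduct, dotProduct_add, smul_dotProduct,
    dotProduct_smul, smul_eq_mul, dotProduct_comm y a]
  generalize √(1 + a ⬝ᵥ a) = s at *
  rw [haa]
  field_simp
  ring

theorem mem_graphSection_euclideanBall {a p : Fin n → ℝ} {t : ℝ} :
    p ∈ graphSection (euclideanBall (n + 1)) (√(1 + a ⬝ᵥ a) * t) a ↔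
      (stretchMatrix a *ᵥ (p + (t / √(1 + a ⬝ᵥ a)) • a)) ⬝ᵥ
        (stretchMatrix a *ᵥ (p + (t / √(1 + a ⬝ᵥ a)) • a)) ≤ 1 - t ^ 2 := by
  have hsq := Real.sq_sqrt (one_add_dotProduct_self_pos a).le
  have hpos := Real.sqrt_pos.2 (one_add_dotProduct_self_pos a)
  have haa : a ⬝ᵥ a = √(1 + a ⬝ᵥ a) ^ 2 - 1 := by linarith
  have hcomplete_square : (p + (t / √(1 + a ⬝ᵥ a)) • a) ⬝ᵥ (p + (t / √(1 + a ⬝ᵥ a)) • a) +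
      (a ⬝ᵥ (p + (t / √(1 + a ⬝ᵥ a)) • a)) ^ 2 =
        p ⬝ᵥ p + (√(1 + a ⬝ᵥ a) * t + a ⬝ᵥ p) ^ 2 - t ^ 2 := by
    simp only [add_dotProduct, dotProduct_add, smul_dotProduct, dotProduct_smul, smul_eq_mul,
      dotProduct_comm p a]
    generalize √(1 + a ⬝ᵥ a) = s at *
    rw [haa]
    field_simp
    ring
  rw [graphSection, mem_ofPred_eq, vecCons_mem_euclideanBall,
    dotProduct_self_stretchMatrix_mulVec, hcomplete_square]
  constructor <;> intro h <;> linarith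

theorem graphSection_euclideanBall_eq_preimage (a : Fin n → ℝ) {t : ℝ} (ht : 0 < 1 - t ^ 2) :
    graphSection (euclideanBall (n + 1)) (√(1 + a ⬝ᵥ a) * t) a =
      (fun p => ((√(1 - t ^ 2))⁻¹ • stretchMatrix a) *ᵥ p +
        (√(1 - t ^ 2))⁻¹ • stretchMatrix a *ᵥ ((t / √(1 + a ⬝ᵥ a)) • a)) ⁻¹'
          euclideanBall n := by
  ext p
  rw [mem_graphSection_euclideanBall, mem_preimage, Matrix.smul_mulVec, ← smul_add,
    ← Matrix.mulVec_add, euclideanBall, mem_ofPred_eq, smul_dotProduct, dotProduct_smul,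
    smul_eq_mul, smul_eq_mul, ← mul_assoc, ← mul_inv, Real.mul_self_sqrt ht.le,
    inv_mul_le_one₀ ht]

theorem graphSection_euclideanBall_subset_singleton (a : Fin n → ℝ) {t : ℝ} (ht : 1 - t ^ 2 ≤ 0) :
    graphSection (euclideanBall (n + 1)) (√(1 + a ⬝ᵥ a) * t) a ⊆
      {-((t / √(1 + a ⬝ᵥ a)) • a)} := by
  intro p hp
  rw [mem_graphSection_euclideanBall, dotProduct_self_stretchMatrix_mulVec] at hp
  set y := p + (t / √(1 + a ⬝ᵥ a)) • a
  have hy : 0 ≤ y ⬝ᵥ y := by simpa using dotProduct_self_star_nonneg y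
  have hzero : y = 0 := dotProduct_self_eq_zero.1 (by nlinarith [sq_nonneg (a ⬝ᵥ y)])
  exact eq_neg_of_add_eq_zero_left hzero

theorem simplexSecondMoment_graphSection_euclideanBall [NeZero n] (a : Fin n → ℝ) (t : ℝ) :
    simplexSecondMoment (graphSection (euclideanBall (n + 1)) (√(1 + a ⬝ᵥ a) * t) a) =
      ENNReal.ofReal ((√(1 - t ^ 2) ^ n / √(1 + a ⬝ᵥ a)) ^ (n + 3)) *
        simplexSecondMoment (euclideanBall n) := by
  rcases le_or_gt (1 - t ^ 2) 0 with ht | ht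
  · rw [simplexSecondMoment_of_volume_eq_zero (measure_mono_null
      (graphSection_euclideanBall_subset_singleton a ht) (measure_singleton _)),
      Real.sqrt_eq_zero_of_nonpos ht]
    simp [NeZero.ne n]
  · let M := (√(1 - t ^ 2))⁻¹ • stretchMatrix a
    have hs := Real.sqrt_pos.2 (one_add_dotProduct_self_pos a)
    have hdet : M.det = (√(1 - t ^ 2) ^ n / √(1 + a ⬝ᵥ a))⁻¹ := by
      rw [Matrix.det_smul, det_stretchMatrix, Fintype.card_fin, inv_pow, inv_div, div_eq_inv_mul]
    have hpos : 0 < √(1 - t ^ 2) ^ n / √(1 + a ⬝ᵥ a) := by positivity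
    rw [graphSection_euclideanBall_eq_preimage a ht,
      simplexSecondMoment_eq_abs_det_pow_mul measurableSet_euclideanBall
        (by rw [hdet]; exact inv_ne_zero hpos.ne' : M.det ≠ 0), ← mul_assoc,
      ← ENNReal.ofReal_mul (by positivity), hdet, abs_of_pos (inv_pos.2 hpos), ← mul_pow,
      mul_inv_cancel₀ hpos.ne', one_pow, ENNReal.ofReal_one, one_mul]

end BallSection

section BallSlabMoment

variable {n : ℕ}

theorem lintegral_eq_ofReal_mul_lintegral_mul_left {s : ℝ} (hs : 0 < s)
    (f : ℝ → ENNReal) : ∫⁻ b, f b = ENNReal.ofReal s * ∫⁻ t, f (s * t) := by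
  simpa [abs_of_pos hs] using lintegral_eq_abs_det_mul_lintegral_comp volume
    (A := LinearMap.lsmul ℝ ℝ s) (by simpa using hs.ne') f

theorem slabVolume_euclideanBall_smul_vecCons (a : Fin n → ℝ) (t : ℝ) :
    slabVolume (euclideanBall (n + 1)) ((√(1 + a ⬝ᵥ a) * t)⁻¹ • Matrix.vecCons 1 (-a)) =
      slabVolume (euclideanBall (n + 1)) (t⁻¹ • Matrix.vecCons 1 0) := by
  have hpos := one_add_dotProduct_self_pos a
  refine slabVolume_euclideanBall_eq ?_
  simp only [smul_dotProduct, dotProduct_smul, smul_eq_mul, Matrix.cons_dotProduct_cons,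
    neg_dotProduct_neg, zero_dotProduct, add_zero, mul_one]
  rw [← mul_assoc, ← mul_inv, mul_mul_mul_comm, Real.mul_self_sqrt hpos.le, ← mul_inv]
  field_simp

theorem slabMoment_euclideanBall [NeZero n] (k : ℕ) :
    slabMoment (euclideanBall (n + 1)) k = simplexSecondMoment (euclideanBall n) *
      (∫⁻ a : Fin n → ℝ, ENNReal.ofReal (√(1 + a ⬝ᵥ a) ^ (n + 1))⁻¹) *
        ∫⁻ t : ℝ, ENNReal.ofReal (|t| * √(1 - t ^ 2) ^ (n * (n + 3))) *
          slabVolume (euclideanBall (n + 1)) (t⁻¹ • Matrix.vecCons 1 0) ^ k := by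
  have hscale (a : Fin n → ℝ) (t : ℝ) : ENNReal.ofReal (√(1 + a ⬝ᵥ a)) *
      (ENNReal.ofReal |√(1 + a ⬝ᵥ a) * t| *
        ENNReal.ofReal ((√(1 - t ^ 2) ^ n / √(1 + a ⬝ᵥ a)) ^ (n + 3))) =
      ENNReal.ofReal (√(1 + a ⬝ᵥ a) ^ (n + 1))⁻¹ *
        ENNReal.ofReal (|t| * √(1 - t ^ 2) ^ (n * (n + 3))) := by
    have hs := Real.sqrt_pos.2 (one_add_dotProduct_self_pos a)
    simp only [← ENNReal.ofReal_mul, abs_nonneg, hs.le, inv_nonneg.2 (pow_nonneg hs.le _)]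
    congr 1
    rw [abs_mul, abs_of_pos hs, div_pow, ← pow_mul]
    field_simp
    ring
  have htop : simplexSecondMoment (euclideanBall n) ≠ ⊤ := by
    rw [simplexSecondMoment_euclideanBall]
    exact ENNReal.ofReal_ne_top
  rw [slabMoment_eq_lintegral_graphSection measurableSet_euclideanBall, mul_assoc, mul_left_comm,
    ← lintegral_mul_const _ (by simp only [dotProduct]; fun_prop)]
  refine lintegral_congr fun a => ?_
  rw [lintegral_eq_ofReal_mul_lintegral_mul_left
      (Real.sqrt_pos.2 (one_add_dotProduct_self_pos a)), ← lintegral_const_mul' _ _ htop,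
    ← lintegral_const_mul' _ _ ENNReal.ofReal_ne_top,
    ← lintegral_const_mul' _ _ ENNReal.ofReal_ne_top]
  refine lintegral_congr fun t => ?_
  rw [slabVolume_euclideanBall_smul_vecCons, simplexSecondMoment_graphSection_euclideanBall,
    mul_left_comm (simplexSecondMoment _), ← mul_assoc (ENNReal.ofReal (_ ^ (n + 1))⁻¹), ← hscale]
  ring

end BallSlabMoment

section PlaneIntegral

theorem lintegral_Ioi_mul_inv_sqrt_one_add_sq_pow_three :
    ∫⁻ r in Ioi (0 : ℝ), ENNReal.ofReal (r * (√(1 + r ^ 2) ^ 3)⁻¹) = 1 := by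
  have hderiv (r : ℝ) : HasDerivAt (fun r => -(√(1 + r ^ 2))⁻¹) (r * (√(1 + r ^ 2) ^ 3)⁻¹) r := by
    have hpos : 0 < 1 + r ^ 2 := by positivity
    have hinner : HasDerivAt (fun r : ℝ => 1 + r ^ 2) (2 * r) r := by
      simpa using (hasDerivAt_pow 2 r).const_add 1
    refine ((hinner.sqrt hpos.ne').inv (Real.sqrt_pos.2 hpos).ne').neg.congr_deriv ?_
    field_simp
  have hnonneg : ∀ r ∈ Ioi (0 : ℝ), 0 ≤ r * (√(1 + r ^ 2) ^ 3)⁻¹ := fun r hr =>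
    mul_nonneg hr.le (by positivity)
  have hlim : Filter.Tendsto (fun r : ℝ => -(√(1 + r ^ 2))⁻¹) Filter.atTop (nhds 0) := by
    rw [← neg_zero]
    exact (tendsto_inv_atTop_zero.comp (Real.tendsto_sqrt_atTop.comp
      (Filter.tendsto_atTop_add_const_left _ _ (Filter.tendsto_pow_atTop two_ne_zero)))).neg
  have hcont := (hderiv 0).continuousAt.continuousWithinAt (s := Ici 0)
  rw [← ofReal_integral_eq_lintegral_ofReal
      (integrableOn_Ioi_deriv_of_nonneg hcont (fun r _ => hderiv r) hnonneg hlim)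
      ((ae_restrict_iff' measurableSet_Ioi).2 (.of_forall hnonneg)),
    integral_Ioi_of_hasDerivAt_of_nonneg hcont (fun r _ => hderiv r) hnonneg hlim]
  simp

theorem lintegral_inv_sqrt_one_add_dotProduct_self_pow_three :
    ∫⁻ a : Fin 2 → ℝ, ENNReal.ofReal (√(1 + a ⬝ᵥ a) ^ 3)⁻¹ = ENNReal.ofReal (2 * Real.pi) := by
  have hradial (x : ℝ × ℝ) : ENNReal.ofReal x.1 • ENNReal.ofReal (√(1 +
      MeasurableEquiv.finTwoArrow.symm (polarCoord.symm x) ⬝ᵥ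
        MeasurableEquiv.finTwoArrow.symm (polarCoord.symm x)) ^ 3)⁻¹ =
      ENNReal.ofReal (x.1 * (√(1 + x.1 ^ 2) ^ 3)⁻¹) * 1 := by
    have hnorm : MeasurableEquiv.finTwoArrow.symm (polarCoord.symm x) ⬝ᵥ
        MeasurableEquiv.finTwoArrow.symm (polarCoord.symm x) = x.1 ^ 2 := by
      change ![x.1 * Real.cos x.2, x.1 * Real.sin x.2] ⬝ᵥ
        ![x.1 * Real.cos x.2, x.1 * Real.sin x.2] = x.1 ^ 2
      rw [Matrix.vec2_dotProduct']
      linear_combination x.1 ^ 2 * Real.sin_sq_add_cos_sq x.2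
    rw [hnorm, smul_eq_mul, mul_one, ← ENNReal.ofReal_mul' (by positivity)]
  rw [← (volume_preserving_finTwoArrow ℝ).symm.lintegral_comp
      (by simp only [dotProduct]; fun_prop), ← lintegral_comp_polarCoord_symm]
  simp only [hradial]
  rw [polarCoord_target, Measure.volume_eq_prod, ← Measure.prod_restrict,
    lintegral_prod_mul (f := fun r => ENNReal.ofReal (r * (√(1 + r ^ 2) ^ 3)⁻¹)) (g := fun _ => 1)
      (by fun_prop) (by fun_prop),
    lintegral_Ioi_mul_inv_sqrt_one_add_sq_pow_three, one_mul, lintegral_one,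
    Measure.restrict_apply_univ, Real.volume_Ioo]
  congr 1
  ring

end PlaneIntegral

section BallThreeSlabMoment

theorem lintegral_Icc_comp_abs {f : ℝ → ℝ} (hf : Continuous f) {r : ℝ}
    (hnonneg : ∀ t ∈ Icc 0 r, 0 ≤ f t) (hr : 0 ≤ r) :
    ∫⁻ t in Icc (-r) r, ENNReal.ofReal (f |t|) = ENNReal.ofReal (2 * ∫ t in (0 : ℝ)..r, f t) := by
  have hint : Continuous fun t => f |t| := by fun_prop
  have hright : ∫ t in (0 : ℝ)..r, f |t| = ∫ t in (0 : ℝ)..r, f t :=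
    intervalIntegral.integral_congr fun t ht => by
      rw [uIcc_of_le hr] at ht
      simp only [abs_of_nonneg ht.1]
  have hleft : ∫ t in (-r)..0, f |t| = ∫ t in (0 : ℝ)..r, f |t| := by
    simpa using (intervalIntegral.integral_comp_neg (a := 0) (b := r) fun t => f |t|).symm
  rw [← ofReal_integral_eq_lintegral_ofReal
      (hint.continuousOn.integrableOn_compact isCompact_Icc)
      ((ae_restrict_mem measurableSet_Icc).mono fun t ht =>
        hnonneg _ ⟨abs_nonneg t, abs_le.2 ht⟩),
    integral_Icc_eq_integral_Ioc, ← intervalIntegral.integral_of_le (by linarith),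
    ← intervalIntegral.integral_add_adjacent_intervals (b := 0)
      (hint.intervalIntegrable _ _) (hint.intervalIntegrable _ _), hleft, hright, two_mul]

theorem three_mul_sub_pow_three_nonneg {t : ℝ} (ht : t ∈ Icc (0 : ℝ) 1) : 0 ≤ 3 * t - t ^ 3 := by
  have hcube : t ^ 3 ≤ t := pow_le_of_le_one ht.1 ht.2 three_ne_zero
  linarith [ht.1]

theorem abs_mul_sqrt_pow_mul_slabVolume_euclideanBall_three (k : ℕ) (t : ℝ) :
    ENNReal.ofReal (|t| * √(1 - t ^ 2) ^ 10) *
        slabVolume (euclideanBall 3) (t⁻¹ • Matrix.vecCons 1 0) ^ k =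
      (Icc (-1 : ℝ) 1).indicator (fun t => ENNReal.ofReal (|t| * (1 - |t| ^ 2) ^ 5 *
        (2 * Real.pi / 3 * (3 * |t| - |t| ^ 3)) ^ k)) t := by
  by_cases ht : |t| ≤ 1
  · have hmem : t ∈ Icc (-1 : ℝ) 1 := abs_le.1 ht
    have hsq : 0 ≤ 1 - t ^ 2 := sub_nonneg.2 ((sq_le_one_iff_abs_le_one t).2 ht)
    rw [indicator_of_mem hmem, show 10 = 2 * 5 from rfl, pow_mul √(1 - t ^ 2), Real.sq_sqrt hsq,
      sq_abs]
    rcases eq_or_ne t 0 with rfl | h0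
    · simp
    rw [slabVolume_euclideanBall_three (abs_pos.2 h0) ht (by simp [← sq]),
      ← ENNReal.ofReal_pow (mul_nonneg (by positivity)
        (three_mul_sub_pow_three_nonneg ⟨abs_nonneg t, ht⟩)), ← ENNReal.ofReal_mul (by positivity)]
  · have hmem : t ∉ Icc (-1 : ℝ) 1 := fun h => ht (abs_le.2 h)
    have hsq : 1 - t ^ 2 ≤ 0 := by
      rw [sub_nonpos, one_le_sq_iff_one_le_abs]
      exact (not_le.1 ht).le
    rw [indicator_of_notMem hmem, Real.sqrt_eq_zero_of_nonpos hsq]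
    simp

theorem slabMoment_euclideanBall_three (k : ℕ) :
    slabMoment (euclideanBall 3) k = ENNReal.ofReal (3 * Real.pi ^ 4 / 2 *
      ((2 * Real.pi / 3) ^ k * ∫ t in (0 : ℝ)..1, t * (1 - t ^ 2) ^ 5 * (3 * t - t ^ 3) ^ k)) := by
  have hsimplex : simplexSecondMoment (euclideanBall 2) = ENNReal.ofReal (3 * Real.pi ^ 3 / 8) := by
    rw [simplexSecondMoment_euclideanBall, measureReal_def, euclideanBall,
      volume_setOf_dotProduct_self_le zero_le_one, ENNReal.toReal_ofReal (by positivity)]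
    norm_num only [Nat.factorial]
    ring_nf
  have hnonneg : ∀ t ∈ Icc (0 : ℝ) 1,
      0 ≤ t * (1 - t ^ 2) ^ 5 * (2 * Real.pi / 3 * (3 * t - t ^ 3)) ^ k := fun t ht => by
    have := sub_nonneg.2 (pow_le_one₀ (n := 2) ht.1 ht.2)
    have := three_mul_sub_pow_three_nonneg ht
    have := ht.1
    positivity
  calc slabMoment (euclideanBall 3) k
      = ENNReal.ofReal (3 * Real.pi ^ 3 / 8) * ENNReal.ofReal (2 * Real.pi) *
          ENNReal.ofReal (2 * ∫ t in (0 : ℝ)..1,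
            t * (1 - t ^ 2) ^ 5 * (2 * Real.pi / 3 * (3 * t - t ^ 3)) ^ k) := by
        rw [slabMoment_euclideanBall, hsimplex,
          lintegral_inv_sqrt_one_add_dotProduct_self_pow_three,
          lintegral_congr (abs_mul_sqrt_pow_mul_slabVolume_euclideanBall_three k),
          lintegral_indicator measurableSet_Icc,
          lintegral_Icc_comp_abs (by fun_prop) hnonneg zero_le_one]
    _ = _ := by
        rw [← ENNReal.ofReal_mul (by positivity), ← ENNReal.ofReal_mul (by positivity),
          ← intervalIntegral.integral_const_mul ((2 * Real.pi / 3) ^ k)]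
        simp only [mul_pow (2 * Real.pi / 3), mul_left_comm _ ((2 * Real.pi / 3) ^ k)]
        congr 1
        ring

end BallThreeSlabMoment

theorem volume_crossPolytope (ι : Type*) [Fintype ι] :
    volume (crossPolytope ι) =
      ENNReal.ofReal (2 ^ Fintype.card ι / (Fintype.card ι)!) := by
  have hset : crossPolytope ι = {x : ι → ℝ | (∑ i, |x i| ^ (1 : ℝ)) ^ (1 / (1 : ℝ)) ≤ 1} := by
    simp [crossPolytope]
  rcases isEmpty_or_nonempty ι with hι | hι
  · simp [crossPolytope, volume_pi]
  · rw [hset, volume_sum_rpow_le ι le_rfl 1]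
    simp [Real.Gamma_nat_eq_factorial, one_add_one_eq_two]

section Moment

variable {n N : ℕ}

theorem volume_symHull_ofLp (x : Fin N → EuclideanSpace ℝ (Fin n)) :
    volume (symHull fun i => WithLp.ofLp (x i)) = volume (symHull x) := by
  have himage : WithLp.ofLp '' symHull x = symHull fun i => WithLp.ofLp (x i) :=
    image_symHull (WithLp.linearEquiv 2 ℝ (Fin n → ℝ)).toLinearMap x
  rw [← himage, ← (PiLp.volume_preserving_ofLp (Fin n)).measure_preimage_emb
      (MeasurableEquiv.toLp 2 (Fin n → ℝ)).symm.measurableEmbedding,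
    preimage_image_eq _ (WithLp.ofLp_injective 2)]

theorem momentV_ofLp_preimage_one (hN : N ≠ 0) (B : Set (Fin n → ℝ)) :
    momentV n N (WithLp.ofLp ⁻¹' B) 1 =
      (∫⁻ x in univ.pi fun _ : Fin N => B, volume (symHull x)).toReal /
        (volume B).toReal ^ (N + 1) := by
  have : NeZero N := ⟨hN⟩
  let e : EuclideanSpace ℝ (Fin n) ≃ᵐ (Fin n → ℝ) := (MeasurableEquiv.toLp 2 (Fin n → ℝ)).symm
  have he : MeasurePreserving e := PiLp.volume_preserving_ofLp (Fin n)
  have hB : volume (WithLp.ofLp ⁻¹' B) = volume B := he.measure_preimage_equiv B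
  have hpre : {x : Fin N → EuclideanSpace ℝ (Fin n) | ∀ i, x i ∈ WithLp.ofLp ⁻¹' B} =
      (fun x i => WithLp.ofLp (x i)) ⁻¹' univ.pi fun _ => B := by
    ext x
    simp
  have hchange : ∫ x : Fin N → EuclideanSpace ℝ (Fin n) in
        (fun x i => WithLp.ofLp (x i)) ⁻¹' univ.pi fun _ => B,
        (volume (symHull fun i => WithLp.ofLp (x i))).toReal =
      ∫ y in univ.pi fun _ : Fin N => B, (volume (symHull y)).toReal :=
    (volume_preserving_pi fun _ : Fin N => he).setIntegral_preimage_emb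
      (MeasurableEquiv.piCongrRight fun _ => e).measurableEmbedding
      (fun y => (volume (symHull y)).toReal) _
  have hfinite : ∀ x : Fin N → Fin n → ℝ, volume (symHull x) < ⊤ :=
    fun x => (isCompact_symHull x).measure_lt_top
  simp only [momentV, Real.rpow_one, convexHull_range_union_neg_range, ← volume_symHull_ofLp, hB,
    hpre]
  rw [integral_div, hchange, integral_toReal measurable_volume_symHull.aemeasurable
    (.of_forall hfinite), div_div, pow_succ']

theorem momentV_closedBall_one (hN : N ≠ 0) (hn : n ≤ N) :
    momentV n N (Metric.closedBall 0 1) 1 =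
      N.choose n * (2 ^ n / n ! * (slabMoment (euclideanBall n) (N - n)).toReal) /
        (volume (euclideanBall n)).toReal ^ (N + 1) := by
  rw [← ofLp_preimage_euclideanBall, momentV_ofLp_preimage_one hN,
    lintegral_volume_symHull hn measurableSet_euclideanBall neg_euclideanBall,
    volume_crossPolytope, Fintype.card_fin, ENNReal.toReal_mul, ENNReal.toReal_mul,
    ENNReal.toReal_natCast, ENNReal.toReal_ofReal (by positivity)]

end Moment

section OneDimensionalIntegrals

theorem integral_mul_one_sub_sq_mul_pow {g g' : ℝ → ℝ} (hg : ∀ t, HasDerivAt g (g' t) t)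
    (hg' : Continuous g') (m : ℕ) :
    3 * (m + 1) * ∫ t in (0 : ℝ)..1, g t * (1 - t ^ 2) * (3 * t - t ^ 3) ^ m =
      g 1 * 2 ^ (m + 1) - ∫ t in (0 : ℝ)..1, g' t * (3 * t - t ^ 3) ^ (m + 1) := by
  have hpow : ∀ t : ℝ, HasDerivAt (fun t => (3 * t - t ^ 3) ^ (m + 1))
      (3 * (m + 1) * (1 - t ^ 2) * (3 * t - t ^ 3) ^ m) t := fun t => by
    refine ((((hasDerivAt_id t).const_mul 3).sub (hasDerivAt_pow 3 t)).pow (m + 1)).congr_deriv ?_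
    simp only [Nat.cast_add, Nat.cast_one, id_eq, Pi.sub_apply, add_tsub_cancel_right, mul_one,
      Nat.cast_ofNat, Nat.add_one_sub_one]
    ring
  have hparts := intervalIntegral.integral_mul_deriv_eq_deriv_mul (a := 0) (b := 1)
    (fun t _ => hg t) (fun t _ => hpow t) (hg'.intervalIntegrable _ _)
    (Continuous.intervalIntegrable (by fun_prop) _ _)
  rw [← intervalIntegral.integral_const_mul]
  convert hparts using 1
  · congr 1 with t
    ring
  · norm_num

theorem hasDerivAt_one_sub_sq (t : ℝ) : HasDerivAt (fun t : ℝ => 1 - t ^ 2) (-2 * t) t :=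
  ((hasDerivAt_pow 2 t).const_sub 1).congr_deriv (by simp)

theorem integral_one_sub_sq_mul_pow (m : ℕ) :
    3 * ((m : ℝ) + 1) * ∫ t in (0 : ℝ)..1, (1 - t ^ 2) * (3 * t - t ^ 3) ^ m = 2 ^ (m + 1) := by
  simpa using integral_mul_one_sub_sq_mul_pow (g := fun _ => 1) (g' := fun _ => 0)
    (fun t => hasDerivAt_const t 1) continuous_const m

theorem integral_one_sub_sq_pow_four_add (m : ℕ) :
    3 * ((m : ℝ) + 1) * (m + 3) * ∫ t in (0 : ℝ)..1,
        ((1 - t ^ 2) ^ 4 + 3 * (1 - t ^ 2) ^ 3) * (3 * t - t ^ 3) ^ m = 2 ^ (m + 4) := by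
  have hparts := integral_mul_one_sub_sq_mul_pow
    (g := fun t => (1 - t ^ 2) ^ 3 + 3 * (1 - t ^ 2) ^ 2)
    (g' := fun t => -6 * ((1 - t ^ 2) * (3 * t - t ^ 3)))
    (fun t => (((hasDerivAt_one_sub_sq t).pow 3).add
      (((hasDerivAt_one_sub_sq t).pow 2).const_mul 3)).congr_deriv (by push_cast; ring))
    (by fun_prop) m
  have hfold : ∫ t in (0 : ℝ)..1, -6 * ((1 - t ^ 2) * (3 * t - t ^ 3)) * (3 * t - t ^ 3) ^ (m + 1) =
      -6 * ∫ t in (0 : ℝ)..1, (1 - t ^ 2) * (3 * t - t ^ 3) ^ (m + 2) := by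
    rw [← intervalIntegral.integral_const_mul]
    congr 1 with t
    ring
  have hlast := integral_one_sub_sq_mul_pow (m + 2)
  rw [hfold] at hparts
  simp only [add_mul, mul_assoc (3 : ℝ) (_ ^ 2), ← pow_succ] at hparts ⊢
  push_cast at hlast
  linear_combination ((m : ℝ) + 3) * hparts + 2 * hlast

theorem integral_mul_one_sub_sq_pow_five (n : ℕ) :
    27 * ((n : ℝ) + 3) * (n + 2) * (n + 1) *
        (∫ t in (0 : ℝ)..1, t * (1 - t ^ 2) ^ 5 * (3 * t - t ^ 3) ^ n) =
      2 ^ (n + 8) * (1 - 1 / ((n : ℝ) + 4)) - 105 * ((n : ℝ) + 3) * (n + 2) *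
        ∫ t in (0 : ℝ)..1, (1 - t ^ 2) ^ 4 * (3 * t - t ^ 3) ^ (n + 1) := by
  have hparts := integral_mul_one_sub_sq_mul_pow (g := fun t => t * (1 - t ^ 2) ^ 4)
    (g' := fun t => 35 / 3 * (1 - t ^ 2) ^ 4 - 8 / 3 * ((1 - t ^ 2) ^ 4 + 3 * (1 - t ^ 2) ^ 3))
    (fun t => ((hasDerivAt_id t).mul ((hasDerivAt_one_sub_sq t).pow 4)).congr_deriv
      (by simp only [Pi.pow_apply, one_mul, id_eq, Nat.cast_ofNat, Nat.add_one_sub_one]; ring))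
    (by fun_prop) n
  have hsum := integral_one_sub_sq_pow_four_add (n + 1)
  simp only [mul_assoc _ (_ ^ 4) (1 - _ : ℝ), ← pow_succ, sub_mul (35 / 3 * _ : ℝ),
    mul_assoc (35 / 3 : ℝ), mul_assoc (8 / 3 : ℝ)] at hparts
  rw [intervalIntegral.integral_sub (Continuous.intervalIntegrable (by fun_prop) _ _)
    (Continuous.intervalIntegrable (by fun_prop) _ _), intervalIntegral.integral_const_mul,
    intervalIntegral.integral_const_mul] at hparts
  push_cast at hsum
  have hn : (n : ℝ) + 4 ≠ 0 := by positivity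
  rw [one_sub_div hn, mul_div_assoc', eq_sub_iff_add_eq, eq_div_iff hn]
  linear_combination 9 * ((n : ℝ) + 3) * (n + 2) * (n + 4) * hparts + 8 * ((n : ℝ) + 3) * hsum

end OneDimensionalIntegrals

section BallThree

theorem integral_one_sub_sq_pow_four_mul :
    ∫ t in (0 : ℝ)..1, (1 - t ^ 2) ^ 4 * (3 * t - t ^ 3) = 17 / 60 := by
  have hderiv : ∀ t : ℝ, HasDerivAt (fun t => -(1 - t ^ 2) ^ 5 / 5 - (1 - t ^ 2) ^ 6 / 12)
      ((1 - t ^ 2) ^ 4 * (3 * t - t ^ 3)) t := fun t =>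
    ((((hasDerivAt_one_sub_sq t).pow 5).neg.div_const 5).sub
      (((hasDerivAt_one_sub_sq t).pow 6).div_const 12)).congr_deriv (by push_cast; ring)
  rw [intervalIntegral.integral_eq_sub_of_hasDerivAt (fun t _ => hderiv t)
    (Continuous.intervalIntegrable (by fun_prop) _ _)]
  norm_num

theorem integral_one_sub_sq_pow_four_mul_sq :
    ∫ t in (0 : ℝ)..1, (1 - t ^ 2) ^ 4 * (3 * t - t ^ 3) ^ 2 = 2560 / 9009 := by
  have hpow := fun (k : ℕ) (t : ℝ) => hasDerivAt_pow k t
  have hderiv : ∀ t : ℝ, HasDerivAt (fun t => 3 * t ^ 3 - 42 / 5 * t ^ 5 + 79 / 7 * t ^ 7 -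
      76 / 9 * t ^ 9 + 39 / 11 * t ^ 11 - 10 / 13 * t ^ 13 + 1 / 15 * t ^ 15)
      ((1 - t ^ 2) ^ 4 * (3 * t - t ^ 3) ^ 2) t := fun t =>
    (((((((hpow 3 t).const_mul 3).sub ((hpow 5 t).const_mul (42 / 5))).add
      ((hpow 7 t).const_mul (79 / 7))).sub ((hpow 9 t).const_mul (76 / 9))).add
      ((hpow 11 t).const_mul (39 / 11))).sub ((hpow 13 t).const_mul (10 / 13))).add
      ((hpow 15 t).const_mul (1 / 15)) |>.congr_deriv (by push_cast; ring)
  rw [intervalIntegral.integral_eq_sub_of_hasDerivAt (fun t _ => hderiv t)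
    (Continuous.intervalIntegrable (by fun_prop) _ _)]
  norm_num

theorem integral_mul_one_sub_sq_pow_five_nonneg (k : ℕ) :
    0 ≤ ∫ t in (0 : ℝ)..1, t * (1 - t ^ 2) ^ 5 * (3 * t - t ^ 3) ^ k :=
  intervalIntegral.integral_nonneg zero_le_one fun t ht => by
    have := sub_nonneg.2 (pow_le_one₀ (n := 2) ht.1 ht.2)
    have := three_mul_sub_pow_three_nonneg ht
    have := ht.1
    positivity

theorem volume_euclideanBall_three :
    volume (euclideanBall 3) = ENNReal.ofReal (Real.pi * 4 / 3) := by
  rw [← volume_closedBall_eq_volume_euclideanBall, EuclideanSpace.volume_closedBall_fin_three]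
  simp

theorem momentV_closedBall_three_one (k : ℕ) :
    momentV 3 (k + 3) (Metric.closedBall 0 1) 1 =
      27 * ((k : ℝ) + 3) * (k + 2) * (k + 1) / 2 ^ (k + 8) *
        ∫ t in (0 : ℝ)..1, t * (1 - t ^ 2) ^ 5 * (3 * t - t ^ 3) ^ k := by
  have hint := integral_mul_one_sub_sq_pow_five_nonneg k
  have hchoose : ((k + 3).choose 3 : ℝ) = ((k : ℝ) + 3) * (k + 2) * (k + 1) / 6 := by
    have hasc := congrArg (Nat.cast (R := ℝ)) (Nat.ascFactorial_eq_factorial_mul_choose k 3)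
    norm_num [Nat.ascFactorial, Nat.factorial] at hasc
    linarith
  have hvolume : (Real.pi * 4 / 3) ^ (k + 3 + 1) =
      (2 * Real.pi / 3) ^ k * 2 ^ k * (Real.pi * 4 / 3) ^ 4 := by
    rw [← mul_pow, add_assoc, pow_add]
    ring
  rw [momentV_closedBall_one (by lia) (by lia), Nat.add_sub_cancel,
    slabMoment_euclideanBall_three, volume_euclideanBall_three,
    ENNReal.toReal_ofReal (by positivity), ENNReal.toReal_ofReal (by positivity), hchoose, hvolume,
    pow_add 2 k]
  norm_num only [Nat.factorial]
  field_simp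
  ring

end BallThree

/-- For every integer `N ≥ 3`,
`𝔼 V_{ℰ³,N} = 1 − 1/(N+1) − (105 N (N−1) / 2^{N+5}) ∫₀¹ (1 − t²)⁴ (3t − t³)^{N−2} dt`,
where `ℰ³` is the closed unit ball in `ℝ³`; in particular `𝔼 V_{ℰ³,3} = 27/512` and
`𝔼 V_{ℰ³,4} = 72/715`. -/
theorem momentV_ball_formula (N : ℕ) (hN : 3 ≤ N) :
    (momentV 3 N (Metric.closedBall (0 : EuclideanSpace ℝ (Fin 3)) 1) 1 =
      1 - 1 / (N + 1) - (105 * N * (N - 1) / 2 ^ (N + 5) : ℝ) *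
        ∫ t in (0 : ℝ)..1, (1 - t ^ 2) ^ 4 * (3 * t - t ^ 3) ^ (N - 2)) ∧
    momentV 3 3 (Metric.closedBall (0 : EuclideanSpace ℝ (Fin 3)) 1) 1 = 27 / 512 ∧
    momentV 3 4 (Metric.closedBall (0 : EuclideanSpace ℝ (Fin 3)) 1) 1 = 72 / 715 := by
  have hformula : ∀ k : ℕ, momentV 3 (k + 3) (Metric.closedBall 0 1) 1 =
      1 - 1 / ((k : ℝ) + 4) - 105 * ((k : ℝ) + 3) * (k + 2) / 2 ^ (k + 8) *
        ∫ t in (0 : ℝ)..1, (1 - t ^ 2) ^ 4 * (3 * t - t ^ 3) ^ (k + 1) := fun k => by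
    rw [momentV_closedBall_three_one, div_mul_eq_mul_div, integral_mul_one_sub_sq_pow_five]
    field_simp
  refine ⟨?_, ?_, ?_⟩
  · obtain ⟨k, rfl⟩ := Nat.exists_eq_add_of_le' hN
    rw [hformula]
    push_cast
    ring_nf
  · simp only [hformula 0, zero_add, pow_one, integral_one_sub_sq_pow_four_mul]
    norm_num
  · rw [hformula 1, integral_one_sub_sq_pow_four_mul_sq]
    norm_num
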